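/- arXiv:2308.09374 — 3 statements merged into one kernel-verified Lean document; each statement's English description precedes it below -/
import Mathlib

section
/- Let v ∈ (0, 1/2] and let w = (w¹, w²) ∈ ℝ² satisfy |w²| ≤ √(v/(1−v))·|w¹| − 2. Let X ~ N(w¹,1) and Y ~ N(w²,1) be independent and define g_w(v) = P(|Y| ≤ √(v/(1−v))·|X|). Then g_w(v) ≥ 1 − e^{−1} > 1/2. -/
open MeasureTheory ProbabilityTheory Real

noncomputable section

/-- `g_w(v)`: the probability that a 2-dimensional Gaussian with mean `w = (w¹,w²)` and identity
covariance lies in the double cone `A_v = {(x,y) : |y| ≤ √(v/(1-v))·|x|}`. -/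
def gCone (w1 w2 v : ℝ) : ℝ :=
  (((gaussianReal w1 1).prod (gaussianReal w2 1))
      {p : ℝ × ℝ | |p.2| ≤ √(v / (1 - v)) * |p.1|}).toReal

/-!
In polar coordinates the squared distance of a planar Gaussian with covariance `σ² I` from its
mean is exponentially distributed with rate `1 / (2 σ²)`. A point `(a, b)` of the cone `|y| ≤ c |x|`
has distance `(c |a| - |b|) / √(1 + c²)` from the boundary lines, so the cone contains the disc of
that radius about the mean. For slope `c = √(v / (1 - v))` one has `1 + c² = 1 / (1 - v)`.
-/

open scoped ENNReal NNReal

theorem lintegral_Ioi_comp_sq (f : ℝ → ℝ≥0∞) :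
    ∫⁻ s in Set.Ioi 0, f s = ∫⁻ r in Set.Ioi 0, ENNReal.ofReal (2 * r) * f (r ^ 2) := by
  have image_sq : (fun r : ℝ ↦ r ^ 2) '' Set.Ioi 0 = Set.Ioi 0 := by
    refine Set.Subset.antisymm (Set.image_subset_iff.2 fun r hr ↦ pow_pos (Set.mem_Ioi.1 hr) 2) ?_
    exact fun s hs ↦ ⟨√s, sqrt_pos.2 hs, sq_sqrt (le_of_lt hs)⟩
  have monotoneOn_sq : MonotoneOn (fun r : ℝ ↦ r ^ 2) (Set.Ioi 0) :=
    fun r hr _ _ hrs ↦ pow_le_pow_left₀ (le_of_lt hr) hrs 2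
  conv_lhs => rw [← image_sq]
  refine lintegral_image_eq_lintegral_deriv_mul_of_monotoneOn measurableSet_Ioi
    (fun r _ ↦ ?_) monotoneOn_sq f
  simpa using (hasDerivAt_pow 2 r).hasDerivWithinAt

theorem lintegral_comp_sq_add_sq {f : ℝ → ℝ≥0∞} (hf : Measurable f) :
    ∫⁻ p : ℝ × ℝ, f (p.1 ^ 2 + p.2 ^ 2) = ENNReal.ofReal π * ∫⁻ s in Set.Ioi 0, f s := by
  have sq_add_sq_polarCoord_symm (p : ℝ × ℝ) :
      (polarCoord.symm p).1 ^ 2 + (polarCoord.symm p).2 ^ 2 = p.1 ^ 2 := by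
    simp only [polarCoord_symm_apply, mul_pow, ← mul_add, cos_sq_add_sin_sq, mul_one]
  calc ∫⁻ p : ℝ × ℝ, f (p.1 ^ 2 + p.2 ^ 2)
      = ∫⁻ p in Set.Ioi 0 ×ˢ Set.Ioo (-π) π, ENNReal.ofReal p.1 * f (p.1 ^ 2) := by
        simp only [← lintegral_comp_polarCoord_symm fun p : ℝ × ℝ ↦ f (p.1 ^ 2 + p.2 ^ 2),
          sq_add_sq_polarCoord_symm, polarCoord_target, smul_eq_mul]
    _ = ∫⁻ r in Set.Ioi 0, ENNReal.ofReal r * f (r ^ 2) * ENNReal.ofReal (2 * π) := by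
        rw [Measure.volume_eq_prod, ← Measure.prod_restrict, lintegral_prod _ (by fun_prop)]
        simp only [lintegral_const, Measure.restrict_apply_univ, volume_Ioo, sub_neg_eq_add,
          ← two_mul]
    _ = ∫⁻ r in Set.Ioi 0, ENNReal.ofReal π * (ENNReal.ofReal (2 * r) * f (r ^ 2)) := by
        congr with r
        rw [ENNReal.ofReal_mul zero_le_two, ENNReal.ofReal_mul zero_le_two]
        ring
    _ = ENNReal.ofReal π * ∫⁻ s in Set.Ioi 0, f s := by
        rw [lintegral_const_mul _ (by fun_prop), ← lintegral_Ioi_comp_sq]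

theorem lintegral_comp_sub_sq_add_sub_sq {f : ℝ → ℝ≥0∞} (hf : Measurable f) (a b : ℝ) :
    ∫⁻ p : ℝ × ℝ, f ((p.1 - a) ^ 2 + (p.2 - b) ^ 2) =
      ENNReal.ofReal π * ∫⁻ s in Set.Ioi 0, f s := by
  rw [← lintegral_comp_sq_add_sq hf]
  exact lintegral_sub_right_eq_self (fun p : ℝ × ℝ ↦ f (p.1 ^ 2 + p.2 ^ 2)) (a, b)

theorem gaussianPDF_mul_gaussianPDF (a b : ℝ) (v : ℝ≥0) (x y : ℝ) :
    gaussianPDF a v x * gaussianPDF b v y =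
      ENNReal.ofReal π⁻¹ * exponentialPDF (2 * (v : ℝ))⁻¹ ((x - a) ^ 2 + (y - b) ^ 2) := by
  rw [exponentialPDF_of_nonneg (by positivity), gaussianPDF, gaussianPDF,
    ← ENNReal.ofReal_mul (gaussianPDFReal_nonneg a v x), ← ENNReal.ofReal_mul (by positivity)]
  congr 1
  have sq_normalization : (√(2 * π * v))⁻¹ * (√(2 * π * v))⁻¹ = π⁻¹ * (2 * (v : ℝ))⁻¹ := by
    rw [← mul_inv, mul_self_sqrt (by positivity), ← mul_inv]
    ring
  rw [gaussianPDFReal, gaussianPDFReal, mul_mul_mul_comm, sq_normalization, ← exp_add, mul_assoc]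
  congr 3
  ring

theorem measurable_exponentialPDF (r : ℝ) : Measurable (exponentialPDF r) :=
  (measurable_exponentialPDFReal r).ennreal_ofReal

theorem setLIntegral_Ioi_exponentialPDF_mul (r : ℝ) (f : ℝ → ℝ≥0∞) :
    ∫⁻ s in Set.Ioi 0, exponentialPDF r s * f s = ∫⁻ s, exponentialPDF r s * f s := by
  rw [restrict_Ioi_eq_restrict_Ici]
  refine setLIntegral_eq_of_support_subset fun s hs ↦ Set.mem_Ici.2 (not_lt.1 fun s_neg ↦ hs ?_)
  simp only [exponentialPDF_of_neg s_neg, zero_mul]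

theorem map_sub_sq_add_sub_sq_gaussianReal_prod (a b : ℝ) {v : ℝ≥0} (hv : v ≠ 0) :
    ((gaussianReal a v).prod (gaussianReal b v)).map
      (fun p ↦ (p.1 - a) ^ 2 + (p.2 - b) ^ 2) = expMeasure (2 * (v : ℝ))⁻¹ := by
  refine Measure.ext_of_lintegral _ fun f hf ↦ ?_
  have pdf_meas := measurable_exponentialPDF (2 * (v : ℝ))⁻¹
  calc _
    _ = ∫⁻ p : ℝ × ℝ, gaussianPDF a v p.1 * gaussianPDF b v p.2 *
          f ((p.1 - a) ^ 2 + (p.2 - b) ^ 2) := by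
        rw [lintegral_map hf (by fun_prop), gaussianReal_of_var_ne_zero a hv,
          gaussianReal_of_var_ne_zero b hv,
          prod_withDensity (measurable_gaussianPDF a v) (measurable_gaussianPDF b v),
          lintegral_withDensity_eq_lintegral_mul _ (by fun_prop) (by fun_prop)]
        rfl
    _ = ENNReal.ofReal π * ∫⁻ s in Set.Ioi 0,
          ENNReal.ofReal π⁻¹ * (exponentialPDF (2 * (v : ℝ))⁻¹ s * f s) := by
        simp only [gaussianPDF_mul_gaussianPDF, mul_assoc]
        exact lintegral_comp_sub_sq_add_sub_sq
          (f := fun s ↦ ENNReal.ofReal π⁻¹ * (exponentialPDF (2 * (v : ℝ))⁻¹ s * f s))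
          (by fun_prop) a b
    _ = ∫⁻ s, exponentialPDF (2 * (v : ℝ))⁻¹ s * f s := by
        rw [lintegral_const_mul _ (by fun_prop), ← mul_assoc, ← ENNReal.ofReal_mul pi_nonneg,
          mul_inv_cancel₀ pi_ne_zero, ENNReal.ofReal_one, one_mul,
          setLIntegral_Ioi_exponentialPDF_mul]
    _ = ∫⁻ s, f s ∂expMeasure (2 * (v : ℝ))⁻¹ :=
        (lintegral_withDensity_eq_lintegral_mul _ pdf_meas hf).symm

theorem gaussianReal_prod_real_disc (a b : ℝ) {v : ℝ≥0} (hv : v ≠ 0) {s : ℝ} (hs : 0 ≤ s) :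
    ((gaussianReal a v).prod (gaussianReal b v)).real
      {p | (p.1 - a) ^ 2 + (p.2 - b) ^ 2 ≤ s} = 1 - exp (-s / (2 * v)) := by
  have rate_pos : 0 < (2 * (v : ℝ))⁻¹ := by positivity
  have := isProbabilityMeasure_expMeasure rate_pos
  calc _
    _ = (expMeasure (2 * (v : ℝ))⁻¹).real (Set.Iic s) := by
        rw [← map_sub_sq_add_sub_sq_gaussianReal_prod a b hv,
          map_measureReal_apply (by fun_prop) measurableSet_Iic]
        rfl
    _ = 1 - exp (-s / (2 * v)) := by
        rw [← cdf_eq_real, cdf_expMeasure_eq rate_pos, if_pos hs, ← div_eq_inv_mul, neg_div]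

theorem abs_le_mul_abs_of_sub_sq_add_sub_sq_le {c a b x y : ℝ} (hc : 0 ≤ c) (hab : |b| ≤ c * |a|)
    (h : (x - a) ^ 2 + (y - b) ^ 2 ≤ (c * |a| - |b|) ^ 2 / (1 + c ^ 2)) : |y| ≤ c * |x| := by
  have cauchy_schwarz : c * |x - a| + |y - b| ≤ c * |a| - |b| := by
    refine le_of_sq_le_sq ?_ (sub_nonneg.2 hab)
    calc (c * |x - a| + |y - b|) ^ 2
        ≤ (|x - a| ^ 2 + |y - b| ^ 2) * (1 + c ^ 2) := by
          linarith [sq_nonneg (c * |y - b| - |x - a|)]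
      _ = ((x - a) ^ 2 + (y - b) ^ 2) * (1 + c ^ 2) := by rw [sq_abs, sq_abs]
      _ ≤ (c * |a| - |b|) ^ 2 := (le_div_iff₀ (by positivity)).1 h
  calc |y| ≤ |b| + |y - b| := by linarith [abs_sub_abs_le_abs_sub y b]
    _ ≤ c * (|a| - |x - a|) := by linarith
    _ ≤ c * |x| := by
      gcongr
      linarith [abs_sub_abs_le_abs_sub a x, abs_sub_comm a x]

theorem one_sub_exp_le_gaussianReal_prod_real_cone {c a b : ℝ} {v : ℝ≥0} (hv : v ≠ 0) (hc : 0 ≤ c)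
    (hab : |b| ≤ c * |a|) :
    1 - exp (-((c * |a| - |b|) ^ 2 / (1 + c ^ 2)) / (2 * v)) ≤
      ((gaussianReal a v).prod (gaussianReal b v)).real {p | |p.2| ≤ c * |p.1|} := by
  rw [← gaussianReal_prod_real_disc a b hv (by positivity)]
  exact measureReal_mono fun _ ↦ abs_le_mul_abs_of_sub_sq_add_sub_sq_le hc hab

theorem gCone_gt_half_of_deep_in_cone_general (v : ℝ) (hv0 : 0 < v) (hv1 : v < 1) (w1 w2 : ℝ)
    (hw : |w2| ≤ √(v / (1 - v)) * |w1| - √(2 / (1 - v))) :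
    1 - exp (-1) ≤ gCone w1 w2 v ∧ (1 : ℝ) / 2 < 1 - exp (-1) := by
  refine ⟨?_, by linarith [exp_neg_one_lt_half]⟩
  set c := √(v / (1 - v)) with hc
  have one_sub_pos : 0 < 1 - v := sub_pos.2 hv1
  have one_add_sq_slope : 1 + c ^ 2 = 1 / (1 - v) := by
    rw [hc, sq_sqrt (by positivity)]
    field_simp
    ring
  have two_le_sq_dist_boundary : 2 ≤ (c * |w1| - |w2|) ^ 2 / (1 + c ^ 2) := by
    rw [le_div_iff₀ (by positivity), one_add_sq_slope, mul_one_div]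
    exact (sqrt_le_iff.1 (by linarith)).2
  calc 1 - exp (-1)
      ≤ 1 - exp (-((c * |w1| - |w2|) ^ 2 / (1 + c ^ 2)) / (2 * (1 : ℝ≥0))) := by
        gcongr
        rw [NNReal.coe_one]
        linarith
    _ ≤ gCone w1 w2 v := one_sub_exp_le_gaussianReal_prod_real_cone one_ne_zero (sqrt_nonneg _)
        (by linarith [sqrt_nonneg (2 / (1 - v))])

/-- if `v ∈ (0,1/2]` and `|w²| ≤ √(v/(1-v))·|w¹| - 2`, then
`g_w(v) ≥ 1 - e^{-1} > 1/2`. -/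
theorem gCone_gt_half_of_deep_in_cone (v : ℝ) (hv0 : 0 < v) (hv : v ≤ 1 / 2) (w1 w2 : ℝ)
    (hw : |w2| ≤ √(v / (1 - v)) * |w1| - 2) :
    1 - exp (-1) ≤ gCone w1 w2 v ∧ (1 : ℝ) / 2 < 1 - exp (-1) := by
  have sqrt_le_two : √(2 / (1 - v)) ≤ 2 :=
    (sqrt_le_left zero_le_two).2 <| (div_le_iff₀ (by linarith)).2 (by linarith)
  exact gCone_gt_half_of_deep_in_cone_general v hv0 (by linarith) w1 w2 (by linarith)

end
end

section
/- The sequence {f_n} of iterated 3-majority functions with stride 1, where f_n : {-1,1}^{2n+1} → {-1,1} is computed on the graph G_n^{(1)} by setting layer-0 values to the input bits ω(−n),...,ω(n), recursively f(v_{t,i}) = maj(f(v_{t−1,i−1}), f(v_{t−1,i}), f(v_{t−1,i+1})) for |i| ≤ n−t, and f_n(ω) = f(v_{n,0}), is noise stable: lim_{ε→0} sup_n P(f_n(ω) ≠ f_n(ω^ε)) = 0. -/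
open Finset

noncomputable section

/-- The joint probability of the pair `(ω, ω^ε)`, where `ω` is uniform on `{-1,1}^m` and
`ω^ε` flips each bit of `ω` independently with probability `ε`. -/
def pairWeight (m : ℕ) (ε : ℝ) (ω η : Fin m → Bool) : ℝ :=
  (1 / 2) ^ m * ∏ i, (if ω i = η i then 1 - ε else ε)

/-- Expectation of `F ω ω^ε` over the correlated pair `(ω, ω^ε)`. -/
def pairMean (m : ℕ) (ε : ℝ) (F : (Fin m → Bool) → (Fin m → Bool) → ℝ) : ℝ :=
  ∑ ω, ∑ η, pairWeight m ε ω η * F ω η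

/-- `P_{ω,ω^ε}(f(ω) ≠ f(ω^ε))` for a fixed Boolean function `f`. -/
def disagreeProb (m : ℕ) (ε : ℝ) (f : (Fin m → Bool) → Bool) : ℝ :=
  pairMean m ε (fun ω η => if f ω = f η then 0 else 1)

/-- Majority of three Boolean values. -/
def maj (a b c : Bool) : Bool := (a && b) || (a && c) || (b && c)

/-- The value of node `v_{t,i}` in the stride-1 convolutional iterated 3-majority network
`G_n^{(1)}` with input row `ω` (indexed by `ℤ`). -/
def tval (ω : ℤ → Bool) : ℕ → ℤ → Bool
  | 0, i => ω i
  | t + 1, i => maj (tval ω t (i - 1)) (tval ω t i) (tval ω t (i + 1))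

/-- Reindexing of an input vector `ω ∈ {-1,1}^{2n+1}` (coordinates `0,...,2n`) as the row
`ω(-n),...,ω(n)` of input bits of `G_n^{(1)}`. -/
def extend (n : ℕ) (ω : Fin (2 * n + 1) → Bool) : ℤ → Bool := fun i =>
  if h : 0 ≤ i + n ∧ i + n < 2 * n + 1 then ω ⟨(i + n).toNat, by omega⟩ else false

/-- The iterated 3-majority function with stride 1 on `2n+1` input bits. -/
def iterMaj1 (n : ℕ) (ω : Fin (2 * n + 1) → Bool) : Bool := tval (extend n ω) n 0

/-!
Two equal adjacent inputs never change: each always sees itself and its twin. Such a frozen pair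
screens off everything beyond it, so once there is a frozen pair in `[-R, 0]` and another one in
`[0, R]`, the output only depends on the inputs in `[-R, R]`. A window of `R + 1` inputs without
frozen pair alternates, hence is one of two patterns and has probability `2⁻ᴿ`. Therefore the output
changes with probability at most `(2R + 1) ε + 2 · 2⁻ᴿ`, uniformly in `n`: for `R > n`, where the
windows stick out of the input row, the first term already bounds the probability that any input
changes.
-/

section PairProb

variable {m : ℕ} {ε : ℝ}

/-- The probability of the event `A ω ω^ε` under the law `pairWeight m ε` of the correlated pair
`(ω, ω^ε)`. -/
def pairProb (m : ℕ) (ε : ℝ) (A : (Fin m → Bool) → (Fin m → Bool) → Prop) : ℝ :=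
  open Classical in pairMean m ε fun ω η => if A ω η then 1 else 0

lemma disagreeProb_eq_pairProb (f : (Fin m → Bool) → Bool) :
    disagreeProb m ε f = pairProb m ε fun ω η => f ω ≠ f η := by
  unfold disagreeProb pairProb
  congr! 3 with ω η
  split_ifs <;> simp_all

lemma pairWeight_nonneg (hε₀ : 0 ≤ ε) (hε₁ : ε ≤ 1) (ω η : Fin m → Bool) :
    0 ≤ pairWeight m ε ω η := by
  refine mul_nonneg (by positivity) (prod_nonneg fun i _ => ?_)
  split_ifs <;> linarith

lemma pairMean_mono (hε₀ : 0 ≤ ε) (hε₁ : ε ≤ 1) {F G : (Fin m → Bool) → (Fin m → Bool) → ℝ}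
    (h : ∀ ω η, F ω η ≤ G ω η) : pairMean m ε F ≤ pairMean m ε G :=
  sum_le_sum fun ω _ => sum_le_sum fun η _ =>
    mul_le_mul_of_nonneg_left (h ω η) (pairWeight_nonneg hε₀ hε₁ ω η)

lemma pairMean_sum {ι : Type*} (s : Finset ι) (F : ι → (Fin m → Bool) → (Fin m → Bool) → ℝ) :
    pairMean m ε (fun ω η => ∑ i ∈ s, F i ω η) = ∑ i ∈ s, pairMean m ε (F i) := by
  simp only [pairMean, mul_sum, sum_comm (s := s)]

lemma pairMean_prod (g : Fin m → Bool → Bool → ℝ) :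
    pairMean m ε (fun ω η => ∏ i, g i (ω i) (η i)) =
      ∏ i, ∑ a, ∑ b, 1 / 2 * (if a = b then 1 - ε else ε) * g i a b := by
  simp only [prod_univ_sum, Fintype.piFinset_univ, pairMean, pairWeight, prod_mul_distrib,
    prod_const, card_univ, Fintype.card_fin]

lemma pairProb_mono (hε₀ : 0 ≤ ε) (hε₁ : ε ≤ 1) {A B : (Fin m → Bool) → (Fin m → Bool) → Prop}
    (h : ∀ ω η, A ω η → B ω η) : pairProb m ε A ≤ pairProb m ε B := by
  refine pairMean_mono hε₀ hε₁ fun ω η => ?_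
  have := h ω η
  split_ifs <;> simp_all

lemma pairProb_exists_mem_le (hε₀ : 0 ≤ ε) (hε₁ : ε ≤ 1) {ι : Type*} (s : Finset ι)
    (A : ι → (Fin m → Bool) → (Fin m → Bool) → Prop) :
    pairProb m ε (fun ω η => ∃ i ∈ s, A i ω η) ≤ ∑ i ∈ s, pairProb m ε (A i) := by
  classical
  unfold pairProb
  rw [← pairMean_sum]
  refine pairMean_mono hε₀ hε₁ fun ω η => ?_
  have nonneg : ∀ i ∈ s, (0 : ℝ) ≤ if A i ω η then 1 else 0 := fun i _ => by positivity
  split_ifs with h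
  · obtain ⟨i, hi, hA⟩ := h
    simpa [hA] using single_le_sum nonneg hi
  · exact sum_nonneg nonneg

lemma pairProb_or_le (hε₀ : 0 ≤ ε) (hε₁ : ε ≤ 1) (A B : (Fin m → Bool) → (Fin m → Bool) → Prop) :
    pairProb m ε (fun ω η => A ω η ∨ B ω η) ≤ pairProb m ε A + pairProb m ε B := by
  simpa [add_comm] using pairProb_exists_mem_le hε₀ hε₁ univ fun c => bif c then B else A

lemma pairProb_forall_mem (S : Finset (Fin m)) (A : Fin m → Bool → Bool → Prop)
    [∀ i a b, Decidable (A i a b)] :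
    pairProb m ε (fun ω η => ∀ i ∈ S, A i (ω i) (η i)) =
      ∏ i ∈ S, ∑ a, ∑ b, 1 / 2 * (if a = b then 1 - ε else ε) * (if A i a b then 1 else 0) := by
  classical
  calc pairProb m ε (fun ω η => ∀ i ∈ S, A i (ω i) (η i))
    _ = pairMean m ε (fun ω η => ∏ i, if i ∈ S → A i (ω i) (η i) then 1 else 0) := by
      simp only [pairProb, Fintype.prod_boole]
      congr!
    _ = ∏ i, ∑ a, ∑ b, 1 / 2 * (if a = b then 1 - ε else ε) *
          (if i ∈ S → A i a b then 1 else 0) :=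
      pairMean_prod fun i a b => if i ∈ S → A i a b then 1 else 0
    _ = _ := by
      refine (prod_subset (subset_univ S) fun i _ hi => ?_).symm.trans
        (prod_congr rfl fun i hi => ?_)
      · simp only [hi, Fintype.sum_bool]
        grind
      · simp [hi]

lemma pairProb_ne (i : Fin m) : pairProb m ε (fun ω η => ω i ≠ η i) = ε := by
  have h := pairProb_forall_mem (ε := ε) {i} fun _ a b => a ≠ b
  simp only [mem_singleton, forall_eq, prod_singleton] at h
  rw [h]
  simp only [Fintype.sum_bool]
  grind

lemma pairProb_eqOn (S : Finset (Fin m)) (p : Fin m → Bool) :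
    pairProb m ε (fun ω _ => ∀ i ∈ S, ω i = p i) = (1 / 2) ^ #S := by
  rw [pairProb_forall_mem S fun i a _ => a = p i]
  refine prod_eq_pow_card fun i _ => ?_
  simp only [Fintype.sum_bool]
  grind

lemma disagreeProb_le_mul (hε₀ : 0 ≤ ε) (hε₁ : ε ≤ 1) (f : (Fin m → Bool) → Bool) :
    disagreeProb m ε f ≤ m * ε := by
  calc disagreeProb m ε f = pairProb m ε (fun ω η => f ω ≠ f η) := disagreeProb_eq_pairProb f
    _ ≤ pairProb m ε (fun ω η => ∃ i ∈ univ, ω i ≠ η i) :=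
      pairProb_mono hε₀ hε₁ fun ω η hf => by simpa using Function.ne_iff.1 (ne_of_apply_ne f hf)
    _ ≤ ∑ i, pairProb m ε (fun ω η => ω i ≠ η i) := pairProb_exists_mem_le hε₀ hε₁ _ _
    _ = m * ε := by simp [pairProb_ne]

end PairProb

section Dynamics

variable {x y : ℤ → Bool} {a b : ℤ}

lemma maj_self_left (a b : Bool) : maj a a b = a := by cases a <;> cases b <;> rfl

lemma maj_self_right (a b : Bool) : maj a b b = b := by cases a <;> cases b <;> rfl

lemma tval_of_eq_succ {i : ℤ} (h : x i = x (i + 1)) (t : ℕ) :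
    tval x t i = x i ∧ tval x t (i + 1) = x (i + 1) := by
  induction t with
  | zero => exact ⟨rfl, rfl⟩
  | succ t ih =>
    obtain ⟨left, right⟩ := ih
    simp only [tval, add_sub_cancel_right, left, right, ← h, maj_self_left, maj_self_right,
      and_self]

lemma tval_eqOn_Icc_of_boundary (ha : ∀ t, tval x t a = tval y t a)
    (hb : ∀ t, tval x t b = tval y t b) (hxy : Set.EqOn x y (Set.Icc a b)) (t : ℕ) :
    Set.EqOn (tval x t) (tval y t) (Set.Icc a b) := by
  induction t with
  | zero => exact hxy
  | succ t ih =>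
    intro i hi
    rcases hi.1.eq_or_lt with rfl | hai
    · exact ha _
    rcases hi.2.eq_or_lt with rfl | hib
    · exact hb _
    have neighbour (j : ℤ) (_ : i - 1 ≤ j) (_ : j ≤ i + 1) : tval x t j = tval y t j :=
      ih ⟨by omega, by omega⟩
    simp only [tval, neighbour (i - 1) (by omega) (by omega), neighbour i (by omega) (by omega),
      neighbour (i + 1) (by omega) (by omega)]

lemma tval_eqOn_Icc_of_eq_succ (hab : a ≤ b) (ha : x a = x (a + 1)) (hb : x b = x (b + 1))
    (hxy : Set.EqOn x y (Set.Icc a (b + 1))) (t : ℕ) :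
    Set.EqOn (tval x t) (tval y t) (Set.Icc a (b + 1)) := by
  have eq_at (i : ℤ) (hai : a ≤ i) (hib : i ≤ b + 1) : x i = y i := hxy ⟨hai, hib⟩
  have ha' : y a = y (a + 1) := by
    rwa [← eq_at a (by omega) (by omega), ← eq_at (a + 1) (by omega) (by omega)]
  have hb' : y b = y (b + 1) := by
    rwa [← eq_at b (by omega) (by omega), ← eq_at (b + 1) (by omega) (by omega)]
  refine tval_eqOn_Icc_of_boundary (fun s => ?_) (fun s => ?_) hxy t
  · rw [(tval_of_eq_succ ha s).1, (tval_of_eq_succ ha' s).1, eq_at a (by omega) (by omega)]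
  · rw [(tval_of_eq_succ hb s).2, (tval_of_eq_succ hb' s).2, eq_at (b + 1) (by omega) (by omega)]

/-- The row `x` alternates on `[a, b]`: no two adjacent entries in this window form a
frozen pair. -/
def IsAlternatingOn (x : ℤ → Bool) (a b : ℤ) : Prop := ∀ i ∈ Set.Ico a b, x i ≠ x (i + 1)

lemma IsAlternatingOn.exists_eq_xor_odd (h : IsAlternatingOn x a b) :
    ∃ c : Bool, ∀ i ∈ Icc a b, x i = xor c (decide (Odd i)) := by
  refine ⟨xor (x a) (decide (Odd a)), fun i hi => ?_⟩
  obtain ⟨hai, hib⟩ := mem_Icc.1 hi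
  clear hi
  induction i, hai using Int.leInduction with
  | base => simp
  | succ i hai ih =>
    have flip : x (i + 1) = !x i := Bool.eq_not_of_ne (h i ⟨hai, by omega⟩).symm
    rw [flip, ih (by omega)]
    grind

lemma tval_zero_eq_of_not_isAlternatingOn {R : ℤ} (hleft : ¬IsAlternatingOn x (-R) 0)
    (hright : ¬IsAlternatingOn x 0 R) (hxy : Set.EqOn x y (Set.Icc (-R) R)) (t : ℕ) :
    tval x t 0 = tval y t 0 := by
  simp only [IsAlternatingOn, not_forall, not_not] at hleft hright
  obtain ⟨a, ha, hxa⟩ := hleft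
  obtain ⟨b, hb, hxb⟩ := hright
  simp only [Set.mem_Ico] at ha hb
  exact tval_eqOn_Icc_of_eq_succ (by omega) hxa hxb
    (hxy.mono (Set.Icc_subset_Icc (by omega) (by omega))) t ⟨by omega, by omega⟩

end Dynamics

section Inputs

variable {n : ℕ} {ε : ℝ}

/-- The position in the row `ω(-n), …, ω(n)` of each coordinate of the input vector. -/
def inputPosition (n : ℕ) : Fin (2 * n + 1) ↪ ℤ where
  toFun k := k - n
  inj' k l h := by grind

lemma inputPosition_apply (k : Fin (2 * n + 1)) : inputPosition n k = (k : ℤ) - n := rfl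

lemma extend_inputPosition (ω : Fin (2 * n + 1) → Bool) (k : Fin (2 * n + 1)) :
    extend n ω (inputPosition n k) = ω k := by
  have := k.isLt
  simp only [extend, inputPosition_apply, sub_add_cancel, Int.toNat_natCast, Fin.eta]
  exact dif_pos (by omega)

lemma Icc_eq_map_inputPosition (n : ℕ) : Icc (-n : ℤ) n = univ.map (inputPosition n) := by
  ext i
  simp only [mem_Icc, mem_map, mem_univ, true_and]
  constructor
  · rintro ⟨h₁, h₂⟩
    exact ⟨⟨(i + n).toNat, by omega⟩, by rw [inputPosition_apply]; grind⟩
  · rintro ⟨k, rfl⟩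
    rw [inputPosition_apply]
    omega

lemma pairProb_extend_ne {i : ℤ} (hi : i ∈ Icc (-n : ℤ) n) :
    pairProb (2 * n + 1) ε (fun ω η => extend n ω i ≠ extend n η i) = ε := by
  rw [Icc_eq_map_inputPosition] at hi
  obtain ⟨k, -, rfl⟩ := mem_map.1 hi
  simp only [extend_inputPosition, pairProb_ne]

lemma pairProb_exists_extend_ne_le (hε₀ : 0 ≤ ε) (hε₁ : ε ≤ 1) {S : Finset ℤ}
    (hS : S ⊆ Icc (-n : ℤ) n) :
    pairProb (2 * n + 1) ε (fun ω η => ∃ i ∈ S, extend n ω i ≠ extend n η i) ≤ #S * ε :=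
  calc pairProb (2 * n + 1) ε (fun ω η => ∃ i ∈ S, extend n ω i ≠ extend n η i)
    _ ≤ ∑ i ∈ S, pairProb (2 * n + 1) ε (fun ω η => extend n ω i ≠ extend n η i) :=
      pairProb_exists_mem_le hε₀ hε₁ _ _
    _ = ∑ _i ∈ S, ε := sum_congr rfl fun i hi => pairProb_extend_ne (hS hi)
    _ = #S * ε := by simp

lemma pairProb_extend_eqOn {S : Finset ℤ} (hS : S ⊆ Icc (-n : ℤ) n) (p : ℤ → Bool) :
    pairProb (2 * n + 1) ε (fun ω _ => ∀ i ∈ S, extend n ω i = p i) = (1 / 2) ^ #S := by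
  rw [Icc_eq_map_inputPosition, subset_map_iff] at hS
  obtain ⟨T, -, rfl⟩ := hS
  simp only [forall_mem_map, extend_inputPosition, card_map]
  exact pairProb_eqOn T (p ∘ inputPosition n)

lemma pairProb_isAlternatingOn_le (hε₀ : 0 ≤ ε) (hε₁ : ε ≤ 1) {a b : ℤ} {R : ℕ}
    (hR : b = a + R) (ha : -n ≤ a) (hb : b ≤ n) :
    pairProb (2 * n + 1) ε (fun ω _ => IsAlternatingOn (extend n ω) a b) ≤ (1 / 2) ^ R := by
  have card_window : #(Icc a b) = R + 1 := by rw [Int.card_Icc]; omega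
  calc pairProb (2 * n + 1) ε (fun ω _ => IsAlternatingOn (extend n ω) a b)
    _ ≤ pairProb (2 * n + 1) ε (fun ω _ =>
          ∃ c ∈ univ, ∀ i ∈ Icc a b, extend n ω i = xor c (decide (Odd i))) :=
      pairProb_mono hε₀ hε₁ fun ω _ h => by simpa using h.exists_eq_xor_odd
    _ ≤ ∑ c, pairProb (2 * n + 1) ε (fun ω _ =>
          ∀ i ∈ Icc a b, extend n ω i = xor c (decide (Odd i))) :=
      pairProb_exists_mem_le hε₀ hε₁ _ _
    _ = ∑ _c : Bool, (1 / 2) ^ (R + 1) := by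
      simp only [pairProb_extend_eqOn (Icc_subset_Icc ha hb), card_window]
    _ = (1 / 2) ^ R := by simp [pow_succ']

lemma disagreeProb_iterMaj1_le_of_le (hε₀ : 0 ≤ ε) (hε₁ : ε ≤ 1) {R : ℕ} (hR : R ≤ n) :
    disagreeProb (2 * n + 1) ε (iterMaj1 n) ≤ (2 * R + 1) * ε + 2 * (1 / 2) ^ R := by
  let P := pairProb (2 * n + 1) ε
  let changed ω η := ∃ i ∈ Icc (-R : ℤ) R, extend n ω i ≠ extend n η i
  let alternating (a b : ℤ) (ω _η : Fin (2 * n + 1) → Bool) := IsAlternatingOn (extend n ω) a b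
  have disagree_subset (ω η) (h : iterMaj1 n ω ≠ iterMaj1 n η) :
      changed ω η ∨ alternating (-R) 0 ω η ∨ alternating 0 R ω η := by
    by_contra! ⟨hunchanged, hleft, hright⟩
    refine h (tval_zero_eq_of_not_isAlternatingOn hleft hright (fun i hi => ?_) n)
    by_contra hne
    exact hunchanged ⟨i, by simpa using hi, hne⟩
  have hchanged : P changed ≤ (2 * R + 1) * ε := by
    have card_window : #(Icc (-R : ℤ) R) = 2 * R + 1 := by rw [Int.card_Icc]; omega
    refine (pairProb_exists_extend_ne_le hε₀ hε₁
      (Icc_subset_Icc (by omega) (by omega))).trans_eq ?_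
    rw [card_window]
    norm_cast
  calc disagreeProb (2 * n + 1) ε (iterMaj1 n)
    _ = P (fun ω η => iterMaj1 n ω ≠ iterMaj1 n η) := disagreeProb_eq_pairProb _
    _ ≤ P (fun ω η => changed ω η ∨ alternating (-R) 0 ω η ∨ alternating 0 R ω η) :=
      pairProb_mono hε₀ hε₁ disagree_subset
    _ ≤ P changed + (P (alternating (-R) 0) + P (alternating 0 R)) :=
      (pairProb_or_le hε₀ hε₁ _ _).trans (by gcongr; exact pairProb_or_le hε₀ hε₁ _ _)
    _ ≤ (2 * R + 1) * ε + ((1 / 2) ^ R + (1 / 2) ^ R) := by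
      gcongr
      · exact pairProb_isAlternatingOn_le hε₀ hε₁ (by ring) (by omega) (by omega)
      · exact pairProb_isAlternatingOn_le hε₀ hε₁ (by ring) (by omega) (by omega)
    _ = (2 * R + 1) * ε + 2 * (1 / 2) ^ R := by ring

lemma disagreeProb_iterMaj1_le (hε₀ : 0 ≤ ε) (hε₁ : ε ≤ 1) (n R : ℕ) :
    disagreeProb (2 * n + 1) ε (iterMaj1 n) ≤ (2 * R + 1) * ε + 2 * (1 / 2) ^ R := by
  rcases le_total R n with hRn | hnR
  · exact disagreeProb_iterMaj1_le_of_le hε₀ hε₁ hRn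
  · calc disagreeProb (2 * n + 1) ε (iterMaj1 n)
      _ ≤ (2 * n + 1 : ℕ) * ε := disagreeProb_le_mul hε₀ hε₁ _
      _ ≤ (2 * R + 1) * ε := by push_cast; gcongr
      _ ≤ (2 * R + 1) * ε + 2 * (1 / 2) ^ R := le_add_of_nonneg_right (by positivity)

end Inputs

/-- the sequence of iterated 3-majority functions with stride 1 on `G_n^{(1)}` is
noise stable: `lim_{ε→0} sup_n P(f_n(ω) ≠ f_n(ω^ε)) = 0`. -/
theorem iterated_three_majority_stride_one_noise_stable :
    ∀ δ : ℝ, 0 < δ → ∃ ε₀ : ℝ, 0 < ε₀ ∧ ∀ ε : ℝ, 0 < ε → ε ≤ ε₀ → ∀ n : ℕ,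
      disagreeProb (2 * n + 1) ε (iterMaj1 n) < δ := by
  intro δ hδ
  obtain ⟨R, hR⟩ : ∃ R : ℕ, (1 / 2 : ℝ) ^ R < δ / 4 :=
    exists_pow_lt_of_lt_one (by positivity) (by norm_num)
  refine ⟨min 1 (δ / (2 * (2 * R + 1))), by positivity, fun ε hε₀ hε n => ?_⟩
  obtain ⟨hε₁, hεR⟩ := le_min_iff.1 hε
  rw [le_div_iff₀ (by positivity)] at hεR
  calc disagreeProb (2 * n + 1) ε (iterMaj1 n)
    _ ≤ (2 * R + 1) * ε + 2 * (1 / 2) ^ R := disagreeProb_iterMaj1_le hε₀.le hε₁ n R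
    _ < δ / 2 + δ / 2 := by linarith
    _ = δ := add_halves δ

end
end

section
/- The sequence of convolutional iterated 3-majority functions with stride 2 is noise sensitive: with f_n : {-1,1}^{2^{n+1}−1} → {-1,1} defined on the graph G_n^{(2)} by placing the input bits at layer 0, recursively setting f(v_{k,i}) = maj(f(v_{k−1,2i−1}), f(v_{k−1,2i}), f(v_{k−1,2i+1})), and letting f_n(ω) be the value of the single top node, it holds for every 0 < ε ≤ 1/2 that lim_{n→∞} Cov(f_n(ω), f_n(ω^ε)) = 0. -/
open Finset Filter

noncomputable section

/-- The ±1 real value of a Boolean bit. -/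
def chi (b : Bool) : ℝ := if b then 1 else -1

/-- Expectation of `g ω` for `ω` uniform on `{-1,1}^m`. -/
def unifMean (m : ℕ) (g : (Fin m → Bool) → ℝ) : ℝ := (∑ ω, g ω) / 2 ^ m

/-- `Cov_{ω,ω^ε}(g(ω), g(ω^ε))` for a fixed real-valued function `g` on the cube. -/
def noiseCov (m : ℕ) (ε : ℝ) (g : (Fin m → Bool) → ℝ) : ℝ :=
  pairMean m ε (fun ω η => g ω * g η) - unifMean m g ^ 2

/-- The value of node `v_{k,i}` in the stride-2 convolutional iterated 3-majority network
`G_n^{(2)}` with input row `ω` (indexed by `ℕ`; the relevant positions at layer `k` are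
`1,...,2^{n+1-k}-1`). -/
def bval (ω : ℕ → Bool) : ℕ → ℕ → Bool
  | 0, i => ω i
  | k + 1, i => maj (bval ω k (2 * i - 1)) (bval ω k (2 * i)) (bval ω k (2 * i + 1))

/-- Reindexing of an input vector `ω ∈ {-1,1}^{2^{n+1}-1}` (coordinates `0,...,2^{n+1}-2`) as
the row `ω(1),...,ω(2^{n+1}-1)` of input bits of `G_n^{(2)}`. -/
def extend2 (n : ℕ) (ω : Fin (2 ^ (n + 1) - 1) → Bool) : ℕ → Bool := fun i =>
  if h : 1 ≤ i ∧ i ≤ 2 ^ (n + 1) - 1 then ω ⟨i - 1, by omega⟩ else false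

/-- The iterated 3-majority function with stride 2: the value of the top node `v_{n,1}`. -/
def iterMaj2 (n : ℕ) (ω : Fin (2 ^ (n + 1) - 1) → Bool) : Bool := bval (extend2 n ω) n 1

/-!
By the inequality of Schramm and Steif, a function computed by a randomized decision procedure that
reads every fixed bit with probability at most `δ` has Fourier weight at most `k * δ` at level `k`,
so a sequence of functions admitting such procedures with `δ → 0` is noise sensitive.

Evaluate the network from the top: for each layer choose at random one of the three child positions,
and evaluate the child in that position only if its two siblings disagree. The nodes above a fixed
input `p` occupy two adjacent positions in each layer. If, in three consecutive layers, all nodes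
around `p` are `true`, then no deferred child there is evaluated, and for a suitable choice of the
deferred positions no path of evaluated nodes leads through these layers to `p`. Such a block of
layers exists as soon as boundedly many nodes of a lower layer are all `true`: their subtrees are
disjoint from each other and surround `p` without coming close to it, and majority erases the
unknown values near `p` within four layers. The subtrees for different scales occupy disjoint annuli
around `p`, so the blocks act independently and the probability that `p` is read decays
exponentially in `n`.
-/

open scoped BigOperators

section Expectation

lemma expect_mul_of_dependsOn {ι : Type*} [DecidableEq ι] [Fintype ι] {α : ι → Type*}
    [∀ i, Fintype (α i)] {f g : (∀ i, α i) → ℝ} {A B : Set ι} (hf : DependsOn f A)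
    (hg : DependsOn g B) (hAB : Disjoint A B) :
    𝔼 x, f x * g x = (𝔼 x, f x) * 𝔼 x, g x := by
  classical
  -- Exchanging the coordinates of `x` and `y` outside `A` preserves the uniform measure.
  let swap : Equiv.Perm ((∀ i, α i) × ∀ i, α i) :=
    Function.Involutive.toPerm (fun z => (A.piecewise z.1 z.2, A.piecewise z.2 z.1)) fun z => by
      ext i <;> by_cases hi : i ∈ A <;> simp [hi]
  have hf' (x y) : f (A.piecewise x y) = f x := hf fun i hi => by simp [hi]
  have hg' (x y) : g (A.piecewise x y) = g y := hg fun i hi => by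
    simp [hAB.notMem_of_mem_right hi]
  rcases isEmpty_or_nonempty (∀ i, α i)
  · simp
  calc 𝔼 x, f x * g x = 𝔼 z : (∀ i, α i) × ∀ i, α i, f z.1 * g z.1 := by
        rw [← univ_product_univ, expect_product]; simp
    _ = 𝔼 z : (∀ i, α i) × ∀ i, α i, f z.1 * g z.2 :=
        (Fintype.expect_equiv swap _ _ fun z => by
          change _ = f (A.piecewise _ _) * g (A.piecewise _ _)
          rw [hf', hg']).symm
    _ = (𝔼 x, f x) * 𝔼 x, g x := by
        rw [← univ_product_univ, expect_product, Finset.expect_mul_expect]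

lemma expect_prod_of_dependsOn {ι κ : Type*} [DecidableEq ι] [Fintype ι] {α : ι → Type*}
    [∀ i, Fintype (α i)] [∀ i, Nonempty (α i)] (s : Finset κ) {f : κ → (∀ i, α i) → ℝ}
    {A : κ → Set ι} (hf : ∀ b ∈ s, DependsOn (f b) (A b))
    (hA : (s : Set κ).PairwiseDisjoint A) :
    𝔼 x, ∏ b ∈ s, f b x = ∏ b ∈ s, 𝔼 x, f b x := by
  classical
  induction s using Finset.induction_on with
  | empty => simp
  | insert b s hb ih =>
    have hrest : DependsOn (fun x => ∏ a ∈ s, f a x) (⋃ a ∈ s, A a) := fun x y hxy =>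
      prod_congr rfl fun a ha => hf a (mem_insert_of_mem ha) fun i hi =>
        hxy i (Set.mem_biUnion ha hi)
    have hdisj : Disjoint (A b) (⋃ a ∈ s, A a) := Set.disjoint_iUnion₂_right.2 fun a ha =>
      hA (mem_insert_self b s) (mem_insert_of_mem ha) (ne_of_mem_of_not_mem ha hb).symm
    simp only [prod_insert hb]
    rw [expect_mul_of_dependsOn (hf b (mem_insert_self b s)) hrest hdisj,
      ih (fun a ha => hf a (mem_insert_of_mem ha)) (hA.subset (by simp))]

lemma expect_pi_prod {ι : Type*} [DecidableEq ι] [Fintype ι] {α : ι → Type*}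
    [∀ i, Fintype (α i)] (g : ∀ i, α i → ℝ) :
    𝔼 x : ∀ i, α i, ∏ i, g i (x i) = ∏ i, 𝔼 a, g i a := by
  simp only [Fintype.expect_eq_sum_div_card, prod_div_distrib, prod_univ_sum,
    Fintype.piFinset_univ, Fintype.card_pi, Nat.cast_prod]

lemma expect_one_sub_indicator_mul {α : Type*} [Fintype α] [DecidableEq α] (s : α) (x : ℝ) :
    𝔼 a, (1 - (if a = s then 1 else 0) * x) = 1 - 1 / Fintype.card α * x := by
  have : Nonempty α := ⟨s⟩
  rw [expect_sub_distrib, Fintype.expect_const, ← expect_mul, Fintype.expect_eq_sum_div_card,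
    Fintype.sum_ite_eq']

end Expectation

section Fourier

variable {ι : Type*}

/-- The Walsh function `χ_S(ω) = ∏_{i ∈ S} ω_i`. -/
def walsh (S : Finset ι) (ω : ι → Bool) : ℝ := ∏ i ∈ S, chi (ω i)

/-- The Fourier–Walsh coefficient `𝔼 f χ_S` of a function on the discrete cube. -/
def walshCoeff [Fintype ι] [DecidableEq ι] (f : (ι → Bool) → ℝ) (S : Finset ι) : ℝ :=
  𝔼 ω, f ω * walsh S ω

lemma chi_mul_self (b : Bool) : chi b * chi b = 1 := by cases b <;> simp [chi]

lemma chi_not (b : Bool) : chi (!b) = -chi b := by cases b <;> simp [chi]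

lemma walsh_mul_self (S : Finset ι) (ω : ι → Bool) : walsh S ω * walsh S ω = 1 := by
  simp only [walsh, ← prod_mul_distrib, chi_mul_self, prod_const_one]

variable [Fintype ι]

lemma prod_one_add_mul_chi (ρ : ℝ) (ω η : ι → Bool) :
    ∏ i, (1 + ρ * (chi (ω i) * chi (η i))) =
      ∑ S : Finset ι, ρ ^ #S * (walsh S ω * walsh S η) := by
  simp [prod_one_add, walsh, prod_mul_distrib]

lemma prod_one_add_chi (ω η : ι → Bool) :
    ∏ i, (1 + chi (ω i) * chi (η i)) = if ω = η then 2 ^ Fintype.card ι else 0 := by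
  have hfactor (i : ι) : 1 + chi (ω i) * chi (η i) = if ω i = η i then 2 else 0 := by
    cases ω i <;> cases η i <;> norm_num [chi]
  by_cases h : ω = η
  · subst h; simp [hfactor]
  · obtain ⟨i, hi⟩ := Function.ne_iff.1 h
    rw [if_neg h, prod_eq_zero (mem_univ i) (by simp [hfactor, hi])]

variable [DecidableEq ι]

lemma expect_expect_mul_prod_one_add_mul_chi (ρ : ℝ) (f g : (ι → Bool) → ℝ) :
    𝔼 ω, 𝔼 η, f ω * g η * ∏ i, (1 + ρ * (chi (ω i) * chi (η i))) =
      ∑ S, ρ ^ #S * (walshCoeff f S * walshCoeff g S) := by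
  simp only [prod_one_add_mul_chi, mul_sum, expect_sum_comm, walshCoeff]
  refine sum_congr rfl fun S _ => ?_
  rw [Finset.expect_mul_expect, mul_expect]
  refine expect_congr rfl fun ω _ => ?_
  rw [mul_expect]
  exact expect_congr rfl fun η _ => by ring

lemma sum_walshCoeff_sq (f : (ι → Bool) → ℝ) :
    ∑ S, walshCoeff f S ^ 2 = 𝔼 ω, f ω ^ 2 := by
  have h := expect_expect_mul_prod_one_add_mul_chi 1 f f
  simp only [one_mul, one_pow, prod_one_add_chi, ← sq] at h
  rw [← h]
  refine expect_congr rfl fun ω _ => ?_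
  simp only [Fintype.expect_eq_sum_div_card, mul_ite, mul_zero, sum_ite_eq, mem_univ, if_true,
    Fintype.card_pi, prod_const, card_univ, Fintype.card_bool, Nat.cast_pow, Nat.cast_ofNat]
  field_simp

lemma unifMean_eq_expect (m : ℕ) (g : (Fin m → Bool) → ℝ) : unifMean m g = 𝔼 ω, g ω := by
  simp [unifMean, Fintype.expect_eq_sum_div_card]

lemma pairWeight_eq_prod (m : ℕ) (ε : ℝ) (ω η : Fin m → Bool) :
    pairWeight m ε ω η =
      (∏ i, (1 + (1 - 2 * ε) * (chi (ω i) * chi (η i)))) / 2 ^ m / 2 ^ m := by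
  have hfactor (i : Fin m) : (if ω i = η i then 1 - ε else ε) =
      (1 + (1 - 2 * ε) * (chi (ω i) * chi (η i))) / 2 := by
    cases ω i <;> cases η i <;> simp [chi] <;> ring
  simp only [pairWeight, hfactor, prod_div_distrib, prod_const, card_univ, Fintype.card_fin,
    one_div, inv_pow]
  ring

lemma pairMean_mul_eq_sum (m : ℕ) (ε : ℝ) (f g : (Fin m → Bool) → ℝ) :
    pairMean m ε (fun ω η => f ω * g η) =
      ∑ S, (1 - 2 * ε) ^ #S * (walshCoeff f S * walshCoeff g S) := by
  rw [← expect_expect_mul_prod_one_add_mul_chi]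
  simp only [pairMean, pairWeight_eq_prod, Fintype.expect_eq_sum_div_card, Fintype.card_pi,
    Fintype.card_bool, prod_const, card_univ, Fintype.card_fin, Nat.cast_pow, Nat.cast_ofNat,
    sum_div]
  exact sum_congr rfl fun ω _ => sum_congr rfl fun η _ => by ring

lemma noiseCov_eq_sum (m : ℕ) (ε : ℝ) (f : (Fin m → Bool) → ℝ) :
    noiseCov m ε f = ∑ S ∈ univ.erase ∅, (1 - 2 * ε) ^ #S * walshCoeff f S ^ 2 := by
  rw [noiseCov, pairMean_mul_eq_sum, ← add_sum_erase _ _ (mem_univ ∅)]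
  simp [walshCoeff, walsh, unifMean_eq_expect, ← sq]

/-- The Fourier weight of `f` at level `k`. -/
def levelWeight (f : (ι → Bool) → ℝ) (k : ℕ) : ℝ :=
  ∑ S ∈ univ.powersetCard k, walshCoeff f S ^ 2

lemma abs_noiseCov_le (m K : ℕ) {ε : ℝ} (hε : |1 - 2 * ε| ≤ 1) (f : (Fin m → Bool) → ℝ) :
    |noiseCov m ε f| ≤
      ∑ k ∈ Ico 1 K, levelWeight f k + |1 - 2 * ε| ^ K * 𝔼 ω, f ω ^ 2 := by
  have hterm (S : Finset (Fin m)) (hS : S ∈ univ.erase ∅) :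
      |(1 - 2 * ε) ^ #S * walshCoeff f S ^ 2| ≤
        (∑ k ∈ Ico 1 K, if #S = k then walshCoeff f S ^ 2 else 0) +
          |1 - 2 * ε| ^ K * walshCoeff f S ^ 2 := by
    have hcard : 1 ≤ #S := card_pos.2 (nonempty_iff_ne_empty.2 (ne_of_mem_erase hS))
    rw [abs_mul, abs_pow, abs_sq, sum_ite_eq, ite_add]
    split_ifs with h
    · calc |1 - 2 * ε| ^ #S * walshCoeff f S ^ 2 ≤ 1 * walshCoeff f S ^ 2 := by
            gcongr; exact pow_le_one₀ (abs_nonneg _) hε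
        _ ≤ walshCoeff f S ^ 2 + |1 - 2 * ε| ^ K * walshCoeff f S ^ 2 := by
            rw [one_mul]; exact le_add_of_nonneg_right (by positivity)
    · have hK : K ≤ #S := by simp only [mem_Ico, hcard, true_and, not_lt] at h; exact h
      rw [zero_add]
      exact mul_le_mul_of_nonneg_right (pow_le_pow_of_le_one (abs_nonneg _) hε hK) (sq_nonneg _)
  calc |noiseCov m ε f| ≤ ∑ S ∈ univ.erase ∅, |(1 - 2 * ε) ^ #S * walshCoeff f S ^ 2| := by
        rw [noiseCov_eq_sum]; exact abs_sum_le_sum_abs _ _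
    _ ≤ ∑ S : Finset (Fin m), ((∑ k ∈ Ico 1 K, if #S = k then walshCoeff f S ^ 2 else 0) +
          |1 - 2 * ε| ^ K * walshCoeff f S ^ 2) :=
        (sum_le_sum hterm).trans (sum_le_sum_of_subset_of_nonneg (erase_subset _ _)
          fun S _ _ => by positivity)
    _ = ∑ k ∈ Ico 1 K, levelWeight f k + |1 - 2 * ε| ^ K * 𝔼 ω, f ω ^ 2 := by
        rw [sum_add_distrib, sum_comm, ← mul_sum, sum_walshCoeff_sq]
        simp only [levelWeight, powersetCard_eq_filter, powerset_univ, sum_filter]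

end Fourier

section SchrammSteif

variable {ι : Type*} [DecidableEq ι]

/-- The configuration `ω` with the bit at `i` flipped. -/
def flipAt (i : ι) (ω : ι → Bool) : ι → Bool := Function.update ω i (!ω i)

/-- `J ω` is the set of bits examined by a decision procedure on input `ω`: it is itself determined
by the values of those bits. -/
def IsStoppingSet (J : (ι → Bool) → Finset ι) : Prop :=
  ∀ ⦃ω η⦄, (∀ i ∈ J ω, ω i = η i) → J η = J ω

/-- The bits in `J ω` suffice to compute `f ω`. -/
def Determines {β : Type*} (J : (ι → Bool) → Finset ι) (f : (ι → Bool) → β) : Prop :=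
  ∀ ⦃ω η⦄, (∀ i ∈ J ω, ω i = η i) → f η = f ω

/-- The Walsh function `χ_S` on the event that no bit of `S` is examined, and `0` elsewhere. -/
def hiddenWalsh (J : (ι → Bool) → Finset ι) (S : Finset ι) (ω : ι → Bool) : ℝ :=
  if Disjoint S (J ω) then walsh S ω else 0

/-- The Walsh function `χ_S` on the event that some bit of `S` is examined, and `0` elsewhere. -/
def revealedWalsh (J : (ι → Bool) → Finset ι) (S : Finset ι) (ω : ι → Bool) : ℝ :=
  if Disjoint S (J ω) then 0 else walsh S ω

lemma flipAt_involutive (i : ι) : Function.Involutive (flipAt i) := fun ω => by simp [flipAt]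

lemma flipAt_of_ne {i j : ι} (hij : j ≠ i) (ω : ι → Bool) : flipAt i ω j = ω j := by
  simp [flipAt, hij]

lemma walsh_flipAt_of_mem {i : ι} {S : Finset ι} (hi : i ∈ S) (ω : ι → Bool) :
    walsh S (flipAt i ω) = -walsh S ω := by
  rw [walsh, walsh, ← mul_prod_erase _ _ hi, ← mul_prod_erase _ _ hi, ← neg_mul, ← chi_not]
  congr 1
  · simp [flipAt]
  · exact prod_congr rfl fun j hj => by rw [flipAt_of_ne (ne_of_mem_erase hj)]

lemma walsh_flipAt_of_notMem {i : ι} {S : Finset ι} (hi : i ∉ S) (ω : ι → Bool) :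
    walsh S (flipAt i ω) = walsh S ω :=
  prod_congr rfl fun j hj => by rw [flipAt_of_ne (ne_of_mem_of_not_mem hj hi)]

lemma revealedWalsh_eq_sub (J : (ι → Bool) → Finset ι) (S : Finset ι) (ω : ι → Bool) :
    revealedWalsh J S ω = walsh S ω - hiddenWalsh J S ω := by
  unfold revealedWalsh hiddenWalsh
  split_ifs <;> simp

lemma revealedWalsh_mul_self (J : (ι → Bool) → Finset ι) (S : Finset ι) (ω : ι → Bool) :
    revealedWalsh J S ω * revealedWalsh J S ω = if Disjoint S (J ω) then 0 else 1 := by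
  unfold revealedWalsh
  split_ifs <;> simp [walsh_mul_self]

variable {J : (ι → Bool) → Finset ι} {i : ι} {S T : Finset ι} {ω : ι → Bool}

lemma Determines.flipAt_eq {β : Type*} {f : (ι → Bool) → β} (hf : Determines J f)
    (hi : i ∉ J ω) : f (flipAt i ω) = f ω :=
  hf fun _ hj => (flipAt_of_ne (ne_of_mem_of_not_mem hj hi) ω).symm

lemma IsStoppingSet.disjoint_flipAt_iff (hJ : IsStoppingSet J) (hi : i ∈ S) :
    Disjoint S (J (flipAt i ω)) ↔ Disjoint S (J ω) := by
  have hflip (η : ι → Bool) (hη : Disjoint S (J η)) : J (flipAt i η) = J η :=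
    Determines.flipAt_eq hJ (disjoint_left.1 hη hi)
  refine ⟨fun h => ?_, fun h => (hflip ω h).symm ▸ h⟩
  have := hflip _ h
  rw [flipAt_involutive i ω] at this
  exact this ▸ h

variable [Fintype ι]

lemma expect_eq_zero_of_flipAt_eq_neg (i : ι) {F : (ι → Bool) → ℝ}
    (hF : ∀ ω, F (flipAt i ω) = -F ω) : 𝔼 ω, F ω = 0 := by
  have h : 𝔼 ω, -F ω = 𝔼 ω, F ω :=
    Fintype.expect_equiv (flipAt_involutive i).toPerm _ _ fun ω => (hF ω).symm
  rw [expect_neg_distrib] at h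
  linarith

lemma expect_walsh_mul_walsh_eq_zero (hiS : i ∈ S) (hiT : i ∉ T) :
    𝔼 ω, walsh T ω * walsh S ω = 0 :=
  expect_eq_zero_of_flipAt_eq_neg i fun ω => by
    rw [walsh_flipAt_of_mem hiS, walsh_flipAt_of_notMem hiT, mul_neg]

lemma IsStoppingSet.expect_mul_hiddenWalsh_eq_zero (hJ : IsStoppingSet J) (hi : i ∈ S)
    {h : (ι → Bool) → ℝ} (hh : ∀ ω, Disjoint S (J ω) → h (flipAt i ω) = h ω) :
    𝔼 ω, h ω * hiddenWalsh J S ω = 0 :=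
  expect_eq_zero_of_flipAt_eq_neg i fun ω => by
    unfold hiddenWalsh
    simp only [hJ.disjoint_flipAt_iff hi, walsh_flipAt_of_mem hi]
    split_ifs with hdisj
    · rw [hh ω hdisj, mul_neg]
    · simp

lemma IsStoppingSet.expect_hiddenWalsh_mul_hiddenWalsh_eq_zero (hJ : IsStoppingSet J)
    (hiS : i ∈ S) (hiT : i ∉ T) : 𝔼 ω, hiddenWalsh J T ω * hiddenWalsh J S ω = 0 :=
  hJ.expect_mul_hiddenWalsh_eq_zero hiS fun ω hω => by
    rw [hiddenWalsh, hiddenWalsh, Determines.flipAt_eq hJ (disjoint_left.1 hω hiS),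
      walsh_flipAt_of_notMem hiT]

lemma IsStoppingSet.expect_walsh_mul_hiddenWalsh_eq_zero (hJ : IsStoppingSet J)
    (hiS : i ∈ S) (hiT : i ∉ T) : 𝔼 ω, walsh T ω * hiddenWalsh J S ω = 0 :=
  hJ.expect_mul_hiddenWalsh_eq_zero hiS fun ω _ => walsh_flipAt_of_notMem hiT ω

lemma IsStoppingSet.expect_mul_revealedWalsh (hJ : IsStoppingSet J) {f : (ι → Bool) → ℝ}
    (hf : Determines J f) (hS : S.Nonempty) :
    𝔼 ω, f ω * revealedWalsh J S ω = walshCoeff f S := by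
  obtain ⟨i, hi⟩ := hS
  simp only [revealedWalsh_eq_sub, mul_sub, expect_sub_distrib, walshCoeff]
  rw [hJ.expect_mul_hiddenWalsh_eq_zero hi fun ω hω => hf.flipAt_eq (disjoint_left.1 hω hi),
    sub_zero]

lemma IsStoppingSet.expect_revealedWalsh_mul_revealedWalsh (hJ : IsStoppingSet J)
    (hST : ¬ S ⊆ T) (hTS : ¬ T ⊆ S) :
    𝔼 ω, revealedWalsh J S ω * revealedWalsh J T ω = 0 := by
  obtain ⟨i, hiS, hiT⟩ := not_subset.1 hST
  obtain ⟨j, hjT, hjS⟩ := not_subset.1 hTS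
  simp only [revealedWalsh_eq_sub, sub_mul, mul_sub, expect_sub_distrib]
  simp only [mul_comm (hiddenWalsh J S _) (walsh T _)]
  rw [expect_walsh_mul_walsh_eq_zero hjT hjS, hJ.expect_walsh_mul_hiddenWalsh_eq_zero hjT hjS,
    hJ.expect_walsh_mul_hiddenWalsh_eq_zero hiS hiT,
    hJ.expect_hiddenWalsh_mul_hiddenWalsh_eq_zero hjT hjS]
  simp

lemma IsStoppingSet.expect_sq_sum_revealedWalsh (hJ : IsStoppingSet J) {P : Finset (Finset ι)}
    (hP : IsAntichain (· ⊆ ·) (P : Set (Finset ι))) (a : Finset ι → ℝ) :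
    𝔼 ω, (∑ S ∈ P, a S * revealedWalsh J S ω) ^ 2 =
      ∑ S ∈ P, a S ^ 2 * 𝔼 ω, if Disjoint S (J ω) then 0 else 1 := by
  simp only [sq, sum_mul_sum, expect_sum_comm]
  refine sum_congr rfl fun S hS => ?_
  simp only [mul_mul_mul_comm, ← mul_expect]
  rw [sum_eq_single_of_mem S hS fun T hT hTS => ?_]
  · simp only [revealedWalsh_mul_self]
  · rw [hJ.expect_revealedWalsh_mul_revealedWalsh (hP hS hT hTS.symm) (hP hT hS hTS), mul_zero]

/-- The inequality of Schramm and Steif; they take `P` to be a full level of the cube. -/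
lemma IsStoppingSet.sq_sum_walshCoeff_sq_le (hJ : IsStoppingSet J) {f : (ι → Bool) → ℝ}
    (hf : Determines J f) {P : Finset (Finset ι)}
    (hP : IsAntichain (· ⊆ ·) (P : Set (Finset ι))) (hne : ∅ ∉ P) :
    (∑ S ∈ P, walshCoeff f S ^ 2) ^ 2 ≤ (𝔼 ω, f ω ^ 2) *
      ∑ S ∈ P, walshCoeff f S ^ 2 * 𝔼 ω, if Disjoint S (J ω) then 0 else 1 := by
  set g : (ι → Bool) → ℝ := fun ω => ∑ S ∈ P, walshCoeff f S * revealedWalsh J S ω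
  have hfg : 𝔼 ω, f ω * g ω = ∑ S ∈ P, walshCoeff f S ^ 2 := by
    simp only [g, mul_sum, expect_sum_comm, mul_left_comm (f _), ← mul_expect]
    refine sum_congr rfl fun S hS => ?_
    rw [hJ.expect_mul_revealedWalsh hf
      (nonempty_iff_ne_empty.2 (ne_of_mem_of_not_mem hS hne)), sq]
  rw [← hfg, ← hJ.expect_sq_sum_revealedWalsh hP]
  exact expect_mul_sq_le_sq_mul_sq _ _ _

lemma expect_not_disjoint_le (J : (ι → Bool) → Finset ι) (S : Finset ι) :
    𝔼 ω, (if Disjoint S (J ω) then 0 else 1 : ℝ) ≤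
      ∑ i ∈ S, 𝔼 ω, if i ∈ J ω then 1 else 0 := by
  rw [← expect_sum_comm]
  refine expect_le_expect fun ω _ => ?_
  have hnonneg : ∀ i ∈ S, (0 : ℝ) ≤ if i ∈ J ω then 1 else 0 := fun i _ => by positivity
  split_ifs with h
  · exact sum_nonneg hnonneg
  · obtain ⟨i, hiS, hiJ⟩ := not_disjoint_iff.1 h
    simpa [hiJ] using single_le_sum hnonneg hiS

lemma levelWeight_le_of_revealment {C : Type*} [Fintype C] [Nonempty C]
    {J : C → (ι → Bool) → Finset ι} (hJ : ∀ c, IsStoppingSet (J c)) {f : (ι → Bool) → ℝ}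
    (hf : ∀ c, Determines (J c) f) {δ : ℝ} (hδ : 0 ≤ δ)
    (hJδ : ∀ i, 𝔼 c, 𝔼 ω, (if i ∈ J c ω then 1 else 0 : ℝ) ≤ δ) {k : ℕ} (hk : k ≠ 0) :
    levelWeight f k ≤ k * δ * 𝔼 ω, f ω ^ 2 := by
  set P : Finset (Finset ι) := univ.powersetCard k
  have hf2 : 0 ≤ 𝔼 ω, f ω ^ 2 := expect_nonneg fun _ _ => sq_nonneg _
  have hlevel : 0 ≤ levelWeight f k := sum_nonneg fun _ _ => sq_nonneg _
  have hP : IsAntichain (· ⊆ ·) (P : Set (Finset ι)) := (Set.sized_powersetCard _ k).isAntichain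
  have hne : ∅ ∉ P := by simp [P, mem_powersetCard, hk.symm]
  have hhit (S) (hS : S ∈ P) : 𝔼 c, 𝔼 ω, (if Disjoint S (J c ω) then 0 else 1 : ℝ) ≤ k * δ :=
    calc 𝔼 c, 𝔼 ω, (if Disjoint S (J c ω) then 0 else 1 : ℝ)
        ≤ ∑ i ∈ S, 𝔼 c, 𝔼 ω, (if i ∈ J c ω then 1 else 0 : ℝ) := by
          rw [← expect_sum_comm]
          exact expect_le_expect fun c _ => expect_not_disjoint_le (J c) S
      _ ≤ #S • δ := sum_le_card_nsmul _ _ _ fun i _ => hJδ i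
      _ = k * δ := by rw [(mem_powersetCard.1 hS).2, nsmul_eq_mul]
  have hsq : levelWeight f k ^ 2 ≤ k * δ * (𝔼 ω, f ω ^ 2) * levelWeight f k :=
    calc levelWeight f k ^ 2
        ≤ 𝔼 c, (𝔼 ω, f ω ^ 2) *
            ∑ S ∈ P, walshCoeff f S ^ 2 * 𝔼 ω, (if Disjoint S (J c ω) then 0 else 1) :=
          le_expect univ_nonempty fun c _ => (hJ c).sq_sum_walshCoeff_sq_le (hf c) hP hne
      _ = (𝔼 ω, f ω ^ 2) *
            ∑ S ∈ P, walshCoeff f S ^ 2 * 𝔼 c, 𝔼 ω, (if Disjoint S (J c ω) then 0 else 1) := by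
          simp only [← mul_expect, expect_sum_comm]
      _ ≤ (𝔼 ω, f ω ^ 2) * ∑ S ∈ P, walshCoeff f S ^ 2 * (k * δ) := by
          gcongr with S hS; exact hhit S hS
      _ = k * δ * (𝔼 ω, f ω ^ 2) * levelWeight f k := by
          rw [← sum_mul, levelWeight]; ring
  rcases hlevel.eq_or_lt with hzero | hpos
  · rw [← hzero]; exact mul_nonneg (mul_nonneg k.cast_nonneg hδ) hf2
  · rw [sq] at hsq
    exact le_of_mul_le_mul_right hsq hpos

end SchrammSteif

theorem tendsto_noiseCov_of_revealment_tendsto_zero {m : ℕ → ℕ}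
    {f : ∀ n, (Fin (m n) → Bool) → ℝ} (hf1 : ∀ n, 𝔼 ω, f n ω ^ 2 ≤ 1)
    {C : ℕ → Type*} [∀ n, Fintype (C n)] [∀ n, Nonempty (C n)]
    {J : ∀ n, C n → (Fin (m n) → Bool) → Finset (Fin (m n))}
    (hJ : ∀ n c, IsStoppingSet (J n c)) (hf : ∀ n c, Determines (J n c) (f n))
    {δ : ℕ → ℝ} (hδ : ∀ n, 0 ≤ δ n)
    (hJδ : ∀ n i, 𝔼 c, 𝔼 ω, (if i ∈ J n c ω then 1 else 0 : ℝ) ≤ δ n)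
    (hδ0 : Tendsto δ atTop (nhds 0)) {ε : ℝ} (hε0 : 0 < ε) (hε1 : ε < 1) :
    Tendsto (fun n => noiseCov (m n) ε (f n)) atTop (nhds 0) := by
  have hρ : |1 - 2 * ε| < 1 := abs_lt.2 ⟨by linarith, by linarith⟩
  have hbound (K n : ℕ) : |noiseCov (m n) ε (f n)| ≤
      (∑ k ∈ Ico 1 K, (k : ℝ)) * δ n + |1 - 2 * ε| ^ K := by
    have hlevel (k) (hk : k ∈ Ico 1 K) : levelWeight (f n) k ≤ k * δ n :=
      (levelWeight_le_of_revealment (hJ n) (hf n) (hδ n) (hJδ n)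
        (Nat.one_le_iff_ne_zero.1 (mem_Ico.1 hk).1)).trans
        (mul_le_of_le_one_right (mul_nonneg k.cast_nonneg (hδ n)) (hf1 n))
    calc |noiseCov (m n) ε (f n)|
        ≤ ∑ k ∈ Ico 1 K, levelWeight (f n) k + |1 - 2 * ε| ^ K * 𝔼 ω, f n ω ^ 2 :=
          abs_noiseCov_le (m n) K hρ.le (f n)
      _ ≤ (∑ k ∈ Ico 1 K, (k : ℝ)) * δ n + |1 - 2 * ε| ^ K := by
          rw [sum_mul]
          exact add_le_add (sum_le_sum hlevel)
            (mul_le_of_le_one_right (by positivity) (hf1 n))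
  refine Metric.tendsto_atTop'.2 fun e he => ?_
  obtain ⟨K, hK⟩ := exists_pow_lt_of_lt_one (half_pos he) hρ
  have hlow : Tendsto (fun n => (∑ k ∈ Ico 1 K, (k : ℝ)) * δ n) atTop (nhds 0) := by
    simpa using hδ0.const_mul (∑ k ∈ Ico 1 K, (k : ℝ))
  obtain ⟨N, hN⟩ := eventually_atTop.1 (hlow.eventually_lt_const (half_pos he))
  refine ⟨N, fun n hn => ?_⟩
  rw [Real.dist_eq, sub_zero]
  linarith [hbound K n, hN n hn.le]

section Network

/-- The position in layer `k` of the left (`e = 0`), middle (`e = 1`) or right (`e = 2`) child of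
the node at position `i` of layer `k + 1`. The subtraction is truncated only at the position
`i = 0`, which carries no node. -/
def child (i : ℕ) (e : Fin 3) : ℕ := 2 * i + e - 1

/-- Layer `l` of `G_n^{(2)}` has a node at position `j`, that is, `1 ≤ j ≤ 2 ^ (n + 1 - l) - 1`. -/
def IsNode (n l j : ℕ) : Prop := 1 ≤ j ∧ (j + 1) * 2 ^ l ≤ 2 ^ (n + 1)

instance (n l j : ℕ) : Decidable (IsNode n l j) := inferInstanceAs (Decidable (_ ∧ _))

lemma child_add_one {i : ℕ} (hi : 1 ≤ i) (e : Fin 3) : child i e + 1 = 2 * i + e := by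
  unfold child; omega

lemma child_injective {i : ℕ} (hi : 1 ≤ i) : Function.Injective (child i) := fun e e' h => by
  have he := child_add_one hi e
  have he' := child_add_one hi e'
  omega

lemma isNode_child {n l i : ℕ} (hi : IsNode n (l + 1) i) (e : Fin 3) : IsNode n l (child i e) := by
  obtain ⟨hpos, htop⟩ := hi
  have hchild := child_add_one hpos e
  refine ⟨by omega, ?_⟩
  calc (child i e + 1) * 2 ^ l ≤ (2 * (i + 1)) * 2 ^ l := by gcongr; omega
    _ = (i + 1) * 2 ^ (l + 1) := by ring
    _ ≤ 2 ^ (n + 1) := htop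

lemma maj_eq_ite (v : Fin 3 → Bool) (t : Fin 3) :
    maj (v 0) (v 1) (v 2) = if v (t + 1) = v (t + 2) then v (t + 1) else v t := by
  fin_cases t <;> cases h0 : v 0 <;> cases h1 : v 1 <;> cases h2 : v 2 <;> simp [maj, h0, h1, h2]

lemma maj_not (a b c : Bool) : maj (!a) (!b) (!c) = !maj a b c := by
  cases a <;> cases b <;> cases c <;> rfl

lemma bval_succ (ω : ℕ → Bool) (l i : ℕ) :
    bval ω (l + 1) i =
      maj (bval ω l (child i 0)) (bval ω l (child i 1)) (bval ω l (child i 2)) := rfl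

lemma bval_succ_eq_ite (ω : ℕ → Bool) (l i : ℕ) (t : Fin 3) :
    bval ω (l + 1) i = if bval ω l (child i (t + 1)) = bval ω l (child i (t + 2))
      then bval ω l (child i (t + 1)) else bval ω l (child i t) :=
  maj_eq_ite (fun e => bval ω l (child i e)) t

lemma bval_not (ω : ℕ → Bool) (l i : ℕ) : bval (fun q => !ω q) l i = !bval ω l i := by
  induction l generalizing i with
  | zero => rfl
  | succ l ih => simp only [bval_succ, ih, maj_not]

lemma bval_congr {ω η : ℕ → Bool} {l i : ℕ}
    (h : ∀ q, i * 2 ^ l < q + 2 ^ l → q < i * 2 ^ l + 2 ^ l → ω q = η q) :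
    bval ω l i = bval η l i := by
  induction l generalizing i with
  | zero => exact h i (by simp) (by simp)
  | succ l ih =>
    have hchild (e : Fin 3) : bval ω l (child i e) = bval η l (child i e) :=
      ih fun q hlow hhigh => by
        have hle : child i e * 2 ^ l ≤ (2 * i + 1) * 2 ^ l := by gcongr; unfold child; omega
        have hge : 2 * i * 2 ^ l ≤ (child i e + 1) * 2 ^ l := by gcongr; unfold child; omega
        rw [add_mul] at hle hge
        refine h q ?_ ?_ <;> rw [pow_succ', mul_left_comm, ← mul_assoc] <;> omega
    simp only [bval_succ, hchild]

end Network

section Queries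

/-- The nodes whose value is computed by the following recursive evaluation of `G_n^{(2)}` on
input `ω`. To evaluate a node of layer `l + 1`, evaluate two of its children first, deferring the
child `defer l`; the deferred child is evaluated only if the other two disagree. -/
inductive Queried (ω : ℕ → Bool) (defer : ℕ → Fin 3) (n : ℕ) : ℕ → ℕ → Prop
  | root : Queried ω defer n n 1
  | step {l i : ℕ} (e : Fin 3) (hi : Queried ω defer n (l + 1) i)
      (he : e = defer l → bval ω l (child i (e + 1)) ≠ bval ω l (child i (e + 2))) :
      Queried ω defer n l (child i e)

variable {ω η : ℕ → Bool} {defer : ℕ → Fin 3} {n l i j p : ℕ}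

lemma Queried.isNode (h : Queried ω defer n l j) : IsNode n l j := by
  induction h with
  | root => exact ⟨le_rfl, by rw [pow_succ']⟩
  | step e _ _ ih => exact isNode_child ih e

lemma Queried.child_of_ne (h : Queried ω defer n (l + 1) i) {e : Fin 3} (he : e ≠ defer l) :
    Queried ω defer n l (child i e) :=
  h.step e fun h' => absurd h' he

lemma Queried.child_defer_add_one (h : Queried ω defer n (l + 1) i) :
    Queried ω defer n l (child i (defer l + 1)) := h.child_of_ne (by omega)

lemma Queried.child_defer_add_two (h : Queried ω defer n (l + 1) i) :
    Queried ω defer n l (child i (defer l + 2)) := h.child_of_ne (by omega)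

lemma Queried.bval_eq (hωη : ∀ q, Queried ω defer n 0 q → ω q = η q)
    (h : Queried ω defer n l j) : bval ω l j = bval η l j := by
  induction l generalizing j with
  | zero => exact hωη j h
  | succ l ih =>
    rw [bval_succ_eq_ite ω l j (defer l), bval_succ_eq_ite η l j (defer l),
      ← ih h.child_defer_add_one, ← ih h.child_defer_add_two]
    split_ifs with hagree
    · rfl
    · exact ih (h.step _ fun _ => hagree)

lemma Queried.siblings_ne_iff (hωη : ∀ q, Queried ω defer n 0 q → ω q = η q)
    (h : Queried ω defer n (l + 1) i) :
    bval ω l (child i (defer l + 1)) ≠ bval ω l (child i (defer l + 2)) ↔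
      bval η l (child i (defer l + 1)) ≠ bval η l (child i (defer l + 2)) := by
  rw [h.child_defer_add_one.bval_eq hωη, h.child_defer_add_two.bval_eq hωη]

lemma queried_congr (hωη : ∀ q, Queried ω defer n 0 q → ω q = η q) :
    Queried η defer n l j ↔ Queried ω defer n l j := by
  constructor <;> intro h
  · induction h with
    | root => exact .root
    | step e _ he ih =>
      exact ih.step e fun h' => by subst h'; exact (ih.siblings_ne_iff hωη).2 (he rfl)
  · induction h with
    | root => exact .root
    | step e hi he ih =>
      exact ih.step e fun h' => by subst h'; exact (hi.siblings_ne_iff hωη).1 (he rfl)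

lemma Queried.exists_parent (h : Queried ω defer n l j) (hl : l < n) :
    ∃ i e, Queried ω defer n (l + 1) i ∧ j = child i e ∧
      (e = defer l → bval ω l (child i (e + 1)) ≠ bval ω l (child i (e + 2))) := by
  cases h with
  | root => exact absurd hl (lt_irrefl n)
  | step e hi he => exact ⟨_, e, hi, rfl, he⟩

/-- The nodes of layer `l` above the input at position `p`, characterized by
`|p - j * 2 ^ l| < 2 ^ l` up to one spurious position `j` when `2 ^ l` divides `p`. -/
def IsAbove (p l j : ℕ) : Prop := p / 2 ^ l ≤ j ∧ j ≤ p / 2 ^ l + 1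

lemma IsAbove.of_child {e : Fin 3} (h : IsAbove p l (child i e)) (hi : 1 ≤ i) :
    IsAbove p (l + 1) i := by
  have hchild := child_add_one hi e
  unfold IsAbove at *
  rw [pow_succ, ← Nat.div_div_eq_div_mul]
  omega

lemma Queried.exists_isAbove (h : Queried ω defer n 0 p) (hl : l ≤ n) :
    ∃ j, Queried ω defer n l j ∧ IsAbove p l j := by
  induction l with
  | zero => exact ⟨p, h, by simp [IsAbove]⟩
  | succ l ih =>
    obtain ⟨j, hj, hpj⟩ := ih (by omega)
    obtain ⟨i, e, hi, rfl, -⟩ := hj.exists_parent hl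
    exact ⟨i, hi, hpj.of_child hi.isNode.1⟩

end Queries

section Shield

variable {ω : ℕ → Bool} {defer : ℕ → Fin 3} {n p l D : ℕ} {E E' : Set ℕ}

/-- All nodes of layer `l` within distance `D` of the nodes above the input `p` have value `true`,
except possibly those at the positions in `E`. -/
def TrueNear (ω : ℕ → Bool) (n p l D : ℕ) (E : Set ℕ) : Prop :=
  ∀ j, IsNode n l j → p / 2 ^ l ≤ j + D → j ≤ p / 2 ^ l + 1 + D → j ∉ E → bval ω l j = true

lemma TrueNear.succ (h : TrueNear ω n p l (2 * D + 2) E)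
    (hE : ∀ j ≥ 1, j ∉ E' → ∃ t, child j (t + 1) ∉ E ∧ child j (t + 2) ∉ E) :
    TrueNear ω n p (l + 1) D E' := by
  intro j hj hlow hhigh hjE
  obtain ⟨t, h1, h2⟩ := hE j hj.1 hjE
  rw [pow_succ, ← Nat.div_div_eq_div_mul] at hlow hhigh
  have hchild (e : Fin 3) (he : child j e ∉ E) : bval ω l (child j e) = true := by
    have hadd := child_add_one hj.1 e
    exact h _ (isNode_child hj e) (by omega) (by omega) he
  rw [bval_succ_eq_ite ω l j t, hchild _ h1, hchild _ h2, if_pos rfl]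

lemma TrueNear.succ_of_ordConnected (h : TrueNear ω n p l (2 * D + 2) E) (hE : E.OrdConnected) :
    TrueNear ω n p (l + 1) D ((2 * ·) ⁻¹' E) :=
  h.succ fun j _ hjE => by
    by_cases hleft : 2 * j - 1 ∈ E
    · exact ⟨0, hjE, fun hright => hjE (hE.out hleft hright ⟨Nat.sub_le _ _, Nat.le_succ _⟩)⟩
    · exact ⟨2, hleft, hjE⟩

lemma TrueNear.succ_of_subsingleton (h : TrueNear ω n p l (2 * D + 2) E) (hE : E.Subsingleton) :
    TrueNear ω n p (l + 1) D ∅ :=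
  h.succ fun j hj _ => by
    by_cases hchild : ∃ t, child j t ∈ E
    · obtain ⟨t, ht⟩ := hchild
      exact ⟨t, fun h1 => absurd (child_injective hj (hE h1 ht)) (by omega),
        fun h2 => absurd (child_injective hj (hE h2 ht)) (by omega)⟩
    · push Not at hchild
      exact ⟨0, hchild 1, hchild 2⟩

lemma TrueNear.succ_of_empty (h : TrueNear ω n p l (2 * D + 2) ∅) : TrueNear ω n p (l + 1) D ∅ :=
  h.succ_of_subsingleton Set.subsingleton_empty

/-- The odd positions of layer `k` at distance between `2` and `254` from the nodes above the
input `p`. The subtrees below them are disjoint and avoid a neighbourhood of `p`; the radius `254`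
comes from iterating `D ↦ 2 * D + 2` six times starting from `2`. -/
def oddAnnulus (n p k : ℕ) : Finset ℕ :=
  {j ∈ Icc (p / 2 ^ k - 254) (p / 2 ^ k + 255) |
    IsNode n k j ∧ j % 2 = 1 ∧ (j + 1 < p / 2 ^ k ∨ p / 2 ^ k + 2 < j)}

lemma trueNear_of_forall_mem_oddAnnulus {k : ℕ}
    (h : ∀ j ∈ oddAnnulus n p k, bval ω k j = true) : TrueNear ω n p (k + 4) 14 ∅ := by
  set a := p / 2 ^ k with ha
  have h0 : TrueNear ω n p k 254 {j | j % 2 = 0 ∨ a ≤ j + 1 ∧ j ≤ a + 2} :=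
    fun j hj hlow hhigh hjE => h j <| by
      simp only [Set.mem_ofPred_eq] at hjE
      simp only [oddAnnulus, mem_filter, mem_Icc, hj, true_and, ← ha]
      omega
  set I : Set ℕ := Set.Icc (a - 2) (a + 3)
  have h1 : TrueNear ω n p (k + 1) 126 ((2 * ·) ⁻¹' I) :=
    h0.succ fun j hj hjI => ⟨1, by
      have hright := child_add_one hj 2
      have hleft := child_add_one hj 0
      simp only [I, Set.mem_preimage, Set.mem_Icc, Set.mem_ofPred_eq, Fin.isValue,
        Fin.reduceAdd] at *
      omega⟩
  have hmono : Monotone (2 * · : ℕ → ℕ) := fun i j hij => Nat.mul_le_mul_left 2 hij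
  have hI1 : ((2 * ·) ⁻¹' I).OrdConnected := Set.ordConnected_Icc.preimage_mono hmono
  have h2 : TrueNear ω n p (k + 2) 62 ((2 * ·) ⁻¹' ((2 * ·) ⁻¹' I)) :=
    h1.succ_of_ordConnected (D := 62) hI1
  have h3 : TrueNear ω n p (k + 3) 30 ((2 * ·) ⁻¹' ((2 * ·) ⁻¹' ((2 * ·) ⁻¹' I))) :=
    h2.succ_of_ordConnected (D := 30) (hI1.preimage_mono hmono)
  exact h3.succ_of_subsingleton (D := 14) fun i hi j hj => by
    simp only [I, Set.mem_preimage, Set.mem_Icc] at hi hj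
    omega

lemma Queried.exists_parent_ne_defer {j : ℕ} (h : Queried ω defer n l j) (hl : l < n)
    (hnear : TrueNear ω n p l (D + 2) ∅) (hj : IsAbove p l j) :
    ∃ i e, Queried ω defer n (l + 1) i ∧ IsAbove p (l + 1) i ∧ j = child i e ∧ e ≠ defer l := by
  obtain ⟨i, e, hi, rfl, he⟩ := h.exists_parent hl
  have hpos := hi.isNode.1
  have htrue (e' : Fin 3) : bval ω l (child i e') = true := by
    have hadd := child_add_one hpos e
    have hadd' := child_add_one hpos e'
    unfold IsAbove at hj
    exact hnear _ (isNode_child hi.isNode e') (by omega) (by omega) (Set.notMem_empty _)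
  exact ⟨i, e, hi, hj.of_child hpos, rfl, fun h' => he h' (by rw [htrue, htrue])⟩

lemma exists_deferral_blocking_chains (a : ℕ) :
    ∃ t : Fin 3 → Fin 3, ∀ i ≥ 1, ∀ e : Fin 3 → Fin 3,
      a ≤ child (child (child i (e 2)) (e 1)) (e 0) →
      child (child (child i (e 2)) (e 1)) (e 0) ≤ a + 1 → ∃ r, e r = t r := by
  -- Deferring `t 0` forces the first ancestor to be `(a + 1) / 2`; deferring `t 1` forces the
  -- second one to be even, and the only parent of an even position has it as its middle child.
  refine ⟨![if a % 2 = 0 then 0 else 2,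
    if (a + 1) / 2 % 4 = 1 then 0 else if (a + 1) / 2 % 4 = 3 then 2 else 1, 1],
    fun i hi e hlow hhigh => ?_⟩
  have h2 := child_add_one hi (e 2)
  have h1 := child_add_one (i := child i (e 2)) (by omega) (e 1)
  have h0 := child_add_one (i := child (child i (e 2)) (e 1)) (by omega) (e 0)
  by_contra! hne
  have hne0 := hne 0
  have hne1 := hne 1
  have hne2 := hne 2
  simp only [Matrix.cons_val] at hne0 hne1 hne2
  split_ifs at hne0 hne1 <;> omega

lemma exists_deferral_not_queried {k : ℕ} (n p : ℕ) (hk : k + 7 ≤ n) :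
    ∃ t : Fin 3 → Fin 3, ∀ ω defer, (∀ r : Fin 3, defer (k + 4 + r) = t r) →
      (∀ j ∈ oddAnnulus n p k, bval ω k j = true) → ¬ Queried ω defer n 0 p := by
  obtain ⟨t, ht⟩ := exists_deferral_blocking_chains (p / 2 ^ (k + 4))
  refine ⟨t, fun ω defer hdefer htrue hp => ?_⟩
  have hnear4 : TrueNear ω n p (k + 4) 14 ∅ := trueNear_of_forall_mem_oddAnnulus htrue
  have hnear5 : TrueNear ω n p (k + 5) 6 ∅ := hnear4.succ_of_empty
  have hnear6 : TrueNear ω n p (k + 6) 2 ∅ := hnear5.succ_of_empty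
  obtain ⟨i₀, hi₀, hp₀⟩ := hp.exists_isAbove (l := k + 4) (by omega)
  obtain ⟨i₁, e₀, hi₁, hp₁, rfl, he₀⟩ := hi₀.exists_parent_ne_defer (by omega) hnear4 hp₀
  obtain ⟨i₂, e₁, hi₂, hp₂, rfl, he₁⟩ := hi₁.exists_parent_ne_defer (by omega) hnear5 hp₁
  obtain ⟨i₃, e₂, hi₃, -, rfl, he₂⟩ := hi₂.exists_parent_ne_defer (by omega) hnear6 hp₂
  obtain ⟨r, hr⟩ := ht i₃ hi₃.isNode.1 ![e₀, e₁, e₂] hp₀.1 hp₀.2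
  rw [← hdefer r] at hr
  fin_cases r
  exacts [he₀ hr, he₁ hr, he₂ hr]

end Shield

section Annuli

variable {n k p : ℕ}

/-- The inputs on which the value of the node at position `j` of layer `k` depends. -/
def cone (n k j : ℕ) : Set (Fin (2 ^ (n + 1) - 1)) :=
  {i | j * 2 ^ k < i + 1 + 2 ^ k ∧ (i + 1 : ℕ) < j * 2 ^ k + 2 ^ k}

/-- The inputs at distance at least `2 ^ k` and less than `2 ^ (k + 8)` from position `p`. -/
def inputAnnulus (n p k : ℕ) : Set (Fin (2 ^ (n + 1) - 1)) :=
  {i | (i + 1 + 2 ^ k ≤ p ∨ p + 2 ^ k ≤ i + 1) ∧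
    p < i + 1 + 2 ^ (k + 8) ∧ (i + 1 : ℕ) < p + 2 ^ (k + 8)}

/-- The indicator of the event that all nodes of `oddAnnulus n p k` have value `true`. -/
def annulusIndicator (n p k : ℕ) (ω : Fin (2 ^ (n + 1) - 1) → Bool) : ℝ :=
  if ∀ j ∈ oddAnnulus n p k, bval (extend2 n ω) k j = true then 1 else 0

lemma dependsOn_bval_extend2 (n k j : ℕ) :
    DependsOn (fun ω => bval (extend2 n ω) k j) (cone n k j) := fun ω η h =>
  bval_congr fun q hlow hhigh => by
    unfold extend2
    split_ifs with hq
    · exact h _ ⟨by simpa [Nat.sub_add_cancel hq.1] using hlow,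
        by simpa [Nat.sub_add_cancel hq.1] using hhigh⟩
    · rfl

lemma bval_extend2_not {j : ℕ} (hj : IsNode n k j) (ω : Fin (2 ^ (n + 1) - 1) → Bool) :
    bval (extend2 n fun i => !ω i) k j = !bval (extend2 n ω) k j := by
  rw [← bval_not]
  refine bval_congr fun q hlow hhigh => ?_
  obtain ⟨hpos, htop⟩ := hj
  have hpow : 2 ^ k ≤ j * 2 ^ k := Nat.le_mul_of_pos_left _ hpos
  rw [add_one_mul] at htop
  have hq : 1 ≤ q ∧ q ≤ 2 ^ (n + 1) - 1 := by omega
  simp only [extend2, hq, and_self, dite_true]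

lemma expect_bval_extend2 {j : ℕ} (hj : IsNode n k j) :
    𝔼 ω, (if bval (extend2 n ω) k j = true then 1 else 0 : ℝ) = 1 / 2 := by
  have hsymm : 𝔼 ω, (if bval (extend2 n ω) k j = true then 0 else 1 : ℝ) =
      𝔼 ω, (if bval (extend2 n ω) k j = true then 1 else 0 : ℝ) :=
    Fintype.expect_equiv (Equiv.piCongrRight fun _ => Equiv.boolNot) _ _ fun ω => by
      have hnot := bval_extend2_not hj ω
      change _ = if bval (extend2 n fun i => !ω i) k j = true then (1 : ℝ) else 0
      cases h : bval (extend2 n ω) k j <;> simp [hnot, h]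
  have hsum : 𝔼 ω, ((if bval (extend2 n ω) k j = true then 1 else 0 : ℝ) +
      if bval (extend2 n ω) k j = true then 0 else 1) = 1 :=
    (expect_congr rfl fun ω _ => by split_ifs <;> norm_num).trans (Fintype.expect_const (1 : ℝ))
  rw [expect_add_distrib, hsymm] at hsum
  linarith

lemma pairwiseDisjoint_cone_oddAnnulus (n p k : ℕ) :
    (oddAnnulus n p k : Set ℕ).PairwiseDisjoint (cone n k) := by
  have hlt {j j' : ℕ} (hj : j % 2 = 1) (hj' : j' % 2 = 1) (h : j < j') :
      Disjoint (cone n k j) (cone n k j') := Set.disjoint_left.2 fun i hi hi' => by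
    have hmul : (j + 2) * 2 ^ k ≤ j' * 2 ^ k := by gcongr; omega
    have h1 := hi.2
    have h2 := hi'.1
    rw [add_mul] at hmul
    omega
  intro j hj j' hj' hne
  have hodd := (mem_filter.1 hj).2.2.1
  have hodd' := (mem_filter.1 hj').2.2.1
  rcases hne.lt_or_gt with h | h
  · exact hlt hodd hodd' h
  · exact (hlt hodd' hodd h).symm

lemma expect_annulusIndicator (n p k : ℕ) :
    𝔼 ω, annulusIndicator n p k ω = (1 / 2) ^ #(oddAnnulus n p k) :=
  calc 𝔼 ω, annulusIndicator n p k ω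
      = 𝔼 ω, ∏ j ∈ oddAnnulus n p k, if bval (extend2 n ω) k j = true then 1 else 0 := by
        simp only [annulusIndicator, prod_boole]
    _ = ∏ j ∈ oddAnnulus n p k, 𝔼 ω, if bval (extend2 n ω) k j = true then 1 else 0 :=
        expect_prod_of_dependsOn _
          (fun j _ ω η h => by simp only [dependsOn_bval_extend2 n k j h])
          (pairwiseDisjoint_cone_oddAnnulus n p k)
    _ = (1 / 2) ^ #(oddAnnulus n p k) :=
        prod_eq_pow_card fun j hj => expect_bval_extend2 (mem_filter.1 hj).2.1

lemma card_oddAnnulus_le (n p k : ℕ) : #(oddAnnulus n p k) ≤ 510 :=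
  (card_filter_le _ _).trans (by rw [Nat.card_Icc]; omega)

lemma le_expect_annulusIndicator (n p k : ℕ) :
    (1 / 2) ^ 510 ≤ 𝔼 ω, annulusIndicator n p k ω := by
  rw [expect_annulusIndicator]
  exact pow_le_pow_of_le_one (by norm_num) (by norm_num) (card_oddAnnulus_le n p k)

lemma cone_subset_inputAnnulus {j : ℕ} (hj : j ∈ oddAnnulus n p k) :
    cone n k j ⊆ inputAnnulus n p k := by
  rintro i ⟨hlow, hhigh⟩
  simp only [oddAnnulus, mem_filter, mem_Icc] at hj
  obtain ⟨⟨hge, hle⟩, -, -, hfar⟩ := hj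
  have hp : p / 2 ^ k * 2 ^ k ≤ p := Nat.div_mul_le_self p _
  have hp' : p < p / 2 ^ k * 2 ^ k + 2 ^ k := Nat.lt_div_mul_add (by positivity)
  have hge' : p / 2 ^ k * 2 ^ k ≤ (j + 254) * 2 ^ k := by gcongr; omega
  have hle' : j * 2 ^ k ≤ (p / 2 ^ k + 255) * 2 ^ k := by gcongr
  have hfar' : (j + 2) * 2 ^ k ≤ p / 2 ^ k * 2 ^ k ∨ (p / 2 ^ k + 3) * 2 ^ k ≤ j * 2 ^ k :=
    hfar.imp (fun h => by gcongr; omega) (fun h => by gcongr; omega)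
  simp only [add_mul] at hge' hle' hfar'
  simp only [inputAnnulus, Set.mem_ofPred_eq, pow_add]
  omega

lemma dependsOn_annulusIndicator (n p k : ℕ) :
    DependsOn (annulusIndicator n p k) (inputAnnulus n p k) := fun ω η h => by
  unfold annulusIndicator
  refine if_congr (forall₂_congr fun j hj => ?_) rfl rfl
  exact iff_of_eq <| congrArg (· = true) <|
    dependsOn_bval_extend2 n k j fun i hi => h i (cone_subset_inputAnnulus hj hi)

lemma pairwise_disjoint_inputAnnulus (n p : ℕ) :
    Pairwise (Function.onFun Disjoint fun b : ℕ => inputAnnulus n p (8 * b)) := by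
  refine (pairwise_disjoint_on _).2 fun b b' hb => Set.disjoint_left.2 fun i hi hi' => ?_
  have hpow : 2 ^ (8 * b + 8) ≤ 2 ^ (8 * b') := Nat.pow_le_pow_right (by norm_num) (by omega)
  have h1 := hi.2
  have h2 := hi'.1
  omega

end Annuli

section Revealment

/-- The random choices of the evaluation procedure: the layers are grouped into blocks of eight,
and in every complete block a deferred child is chosen for each layer. -/
abbrev Strategy (n : ℕ) : Type := Fin (n / 8) → Fin 8 → Fin 3

/-- The child deferred in layer `l` under the strategy `c`; the choice in the layers above the last
complete block is irrelevant. -/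
def deferral {n : ℕ} (c : Strategy n) (l : ℕ) : Fin 3 :=
  if h : l / 8 < n / 8 then c ⟨l / 8, h⟩ ⟨l % 8, Nat.mod_lt l (by norm_num)⟩ else 0

open Classical in
/-- The inputs read by the recursive evaluation of `iterMaj2 n` under the strategy `c`. -/
def revealedSet {n : ℕ} (c : Strategy n) (ω : Fin (2 ^ (n + 1) - 1) → Bool) :
    Finset (Fin (2 ^ (n + 1) - 1)) :=
  {i | Queried (extend2 n ω) (deferral c) n 0 (i + 1)}

variable {n : ℕ}

lemma mem_revealedSet {c : Strategy n} {ω : Fin (2 ^ (n + 1) - 1) → Bool}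
    {i : Fin (2 ^ (n + 1) - 1)} :
    i ∈ revealedSet c ω ↔ Queried (extend2 n ω) (deferral c) n 0 (i + 1) := by
  simp [revealedSet]

lemma extend2_eq_of_forall_mem_revealedSet {c : Strategy n}
    {ω η : Fin (2 ^ (n + 1) - 1) → Bool} (h : ∀ i ∈ revealedSet c ω, ω i = η i) (q : ℕ)
    (hq : Queried (extend2 n ω) (deferral c) n 0 q) : extend2 n ω q = extend2 n η q := by
  unfold extend2
  split_ifs with hrange
  · exact h _ (mem_revealedSet.2 (by simpa [Nat.sub_add_cancel hrange.1] using hq))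
  · rfl

lemma isStoppingSet_revealedSet (c : Strategy n) : IsStoppingSet (revealedSet c) :=
  fun _ _ h => by
    ext i
    rw [mem_revealedSet, mem_revealedSet, queried_congr (extend2_eq_of_forall_mem_revealedSet h)]

lemma determines_iterMaj2 (c : Strategy n) :
    Determines (revealedSet c) fun ω => chi (iterMaj2 n ω) := fun _ _ h => by
  simp only [iterMaj2, Queried.root.bval_eq (extend2_eq_of_forall_mem_revealedSet h)]

lemma exists_block_strategy_notMem_revealedSet (i : Fin (2 ^ (n + 1) - 1)) (b : Fin (n / 8)) :
    ∃ s : Fin 8 → Fin 3, ∀ (c : Strategy n) ω, c b = s →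
      (∀ j ∈ oddAnnulus n (i + 1) (8 * b), bval (extend2 n ω) (8 * b) j = true) →
        i ∉ revealedSet c ω := by
  obtain ⟨t, ht⟩ := exists_deferral_not_queried (k := 8 * b) n (i + 1) (by omega)
  refine ⟨![0, 0, 0, 0, t 0, t 1, t 2, 0], fun c ω hc htrue => ?_⟩
  rw [mem_revealedSet]
  refine ht _ _ (fun r => ?_) htrue
  have hdiv : (8 * b + 4 + r : ℕ) / 8 = b := by omega
  have hmod : (8 * b + 4 + r : ℕ) % 8 = 4 + r := by omega
  simp only [deferral, hdiv, hmod, Fin.is_lt, dite_true, Fin.eta, hc]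
  fin_cases r <;> rfl

lemma exists_indicator_mem_revealedSet_le_prod (i : Fin (2 ^ (n + 1) - 1)) :
    ∃ s : Strategy n, ∀ c ω, (if i ∈ revealedSet c ω then 1 else 0 : ℝ) ≤
      ∏ b : Fin (n / 8),
        (1 - (if c b = s b then 1 else 0) * annulusIndicator n (i + 1) (8 * b) ω) := by
  choose s hs using exists_block_strategy_notMem_revealedSet i
  refine ⟨s, fun c ω => ?_⟩
  split_ifs with hmem
  · refine (prod_eq_one fun b _ => ?_).ge
    unfold annulusIndicator
    split_ifs with hc htrue
    · exact absurd hmem (hs b c ω hc htrue)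
    all_goals simp
  · refine prod_nonneg fun b _ => ?_
    unfold annulusIndicator
    split_ifs <;> simp

lemma expect_prod_one_sub_annulusIndicator (p : ℕ) (u : Fin (n / 8) → ℝ) :
    𝔼 ω, ∏ b : Fin (n / 8), (1 - u b * annulusIndicator n p (8 * b) ω) =
      ∏ b : Fin (n / 8), (1 - u b * 𝔼 ω, annulusIndicator n p (8 * b) ω) := by
  rw [expect_prod_of_dependsOn (A := fun b : Fin (n / 8) => inputAnnulus n p (8 * b)) univ
    (fun b _ ω η h => by simp only [dependsOn_annulusIndicator n p (8 * b) h])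
    fun b _ b' _ hb => pairwise_disjoint_inputAnnulus n p (Fin.val_ne_of_ne hb)]
  simp only [expect_sub_distrib, Fintype.expect_const, ← mul_expect]

/-- A lower bound for the probability that a given block of eight layers keeps a given input from
being read: the strategy makes the right choices in the block, and all odd nodes around the input
have value `true`. -/
def shieldProb : ℝ := (1 / 3) ^ 8 * (1 / 2) ^ 510

lemma shieldProb_pos : 0 < shieldProb := by unfold shieldProb; positivity

lemma shieldProb_le_one : shieldProb ≤ 1 :=
  mul_le_one₀ (by norm_num) (by positivity) (pow_le_one₀ (by norm_num) (by norm_num))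

lemma expect_mem_revealedSet_le (i : Fin (2 ^ (n + 1) - 1)) :
    𝔼 c : Strategy n, 𝔼 ω, (if i ∈ revealedSet c ω then 1 else 0 : ℝ) ≤
      (1 - shieldProb) ^ (n / 8) := by
  obtain ⟨s, hs⟩ := exists_indicator_mem_revealedSet_le_prod i
  set P : Fin (n / 8) → ℝ := fun b => 𝔼 ω, annulusIndicator n (i + 1) (8 * b) ω
  calc 𝔼 c : Strategy n, 𝔼 ω, (if i ∈ revealedSet c ω then 1 else 0 : ℝ)
      ≤ 𝔼 c : Strategy n, 𝔼 ω, ∏ b : Fin (n / 8),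
          (1 - (if c b = s b then 1 else 0) * annulusIndicator n (i + 1) (8 * b) ω) :=
        expect_le_expect fun c _ => expect_le_expect fun ω _ => hs c ω
    _ = 𝔼 c : Strategy n, ∏ b, (1 - (if c b = s b then 1 else 0) * P b) := by
        simp only [expect_prod_one_sub_annulusIndicator, P]
    _ = ∏ b, (1 - (1 / 3) ^ 8 * P b) := by
        rw [expect_pi_prod fun b a => 1 - (if a = s b then 1 else 0) * P b]
        simp only [expect_one_sub_indicator_mul, one_div, Fintype.card_pi, Fintype.card_fin,
          prod_const, card_univ, Nat.cast_pow, Nat.cast_ofNat, inv_pow]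
    _ ≤ ∏ _b : Fin (n / 8), (1 - shieldProb) := by
        refine prod_le_prod (fun b _ => ?_) fun b _ => ?_
        · have hP : P b ≤ 1 := (expect_annulusIndicator n (i + 1) (8 * b)).trans_le
            (pow_le_one₀ (by norm_num) (by norm_num))
          linarith
        · unfold shieldProb
          gcongr
          exact le_expect_annulusIndicator n (i + 1) (8 * b)
    _ = (1 - shieldProb) ^ (n / 8) := by simp

end Revealment

theorem iterated_three_majority_stride_two_noise_sensitive_general
    (ε : ℝ) (hε0 : 0 < ε) (hε1 : ε < 1) :
    Tendsto (fun n => noiseCov (2 ^ (n + 1) - 1) ε (fun ω => chi (iterMaj2 n ω)))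
      atTop (nhds 0) := by
  have hpow : Tendsto (fun n => (1 - shieldProb) ^ (n / 8)) atTop (nhds 0) :=
    (tendsto_pow_atTop_nhds_zero_of_lt_one (sub_nonneg.2 shieldProb_le_one)
      (sub_lt_self 1 shieldProb_pos)).comp (Nat.tendsto_div_const_atTop (by norm_num))
  refine tendsto_noiseCov_of_revealment_tendsto_zero (fun n => ?_)
    (fun _ => isStoppingSet_revealedSet) (fun _ => determines_iterMaj2)
    (fun n => pow_nonneg (sub_nonneg.2 shieldProb_le_one) (n / 8))
    (fun _ => expect_mem_revealedSet_le) hpow hε0 hε1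
  simp only [sq, chi_mul_self, Fintype.expect_const, le_refl]

/-- the sequence of convolutional iterated 3-majority functions with stride 2 is
noise sensitive: for every `0 < ε ≤ 1/2`, `Cov(f_n(ω), f_n(ω^ε)) → 0`. -/
theorem iterated_three_majority_stride_two_noise_sensitive
    (ε : ℝ) (hε0 : 0 < ε) (hε : ε ≤ 1 / 2) :
    Tendsto (fun n => noiseCov (2 ^ (n + 1) - 1) ε (fun ω => chi (iterMaj2 n ω)))
      atTop (nhds 0) :=
  iterated_three_majority_stride_two_noise_sensitive_general ε hε0 (by linarith)

end
end
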